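/- Let M, M' ∈ M_r(ℤ) be symmetric, even, hyperbolic, 2-elementary Gram matrices of the same length a and with δ(M) = δ(M'). Then M and M' are ℤ-congruent, i.e. there exists P ∈ GL_r(ℤ) with PᵀMP = M'. -/

import Mathlib

open Matrix

/-- `M` is the Gram matrix of a hyperbolic lattice, i.e. of signature `(1, r-1)`: over `ℝ`
it is congruent to `diag(1, -1, …, -1)`. -/
def IsHyperbolicGram {r : ℕ} (M : Matrix (Fin r) (Fin r) ℤ) : Prop :=
  ∃ P : Matrix (Fin r) (Fin r) ℝ, IsUnit P.det ∧
    Pᵀ * (M.map (Int.cast : ℤ → ℝ)) * P =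
      Matrix.diagonal (fun i : Fin r => if (i : ℕ) = 0 then (1 : ℝ) else -1)

/-- `M` is `q`-elementary of length `a`: the cokernel of `M : ℤ^r → ℤ^r` is isomorphic to
`(ℤ/qℤ)^a`. -/
def ElemOfLength {r : ℕ} (q a : ℕ) (M : Matrix (Fin r) (Fin r) ℤ) : Prop :=
  Nonempty (((Fin r → ℤ) ⧸ LinearMap.range M.mulVecLin) ≃ₗ[ℤ] (Fin a → ZMod q))

/-- `δ(M) = 0`, i.e. `zᵀ M⁻¹ z ∈ ℤ` for every integer vector `z`. -/
def DeltaZero {r : ℕ} (M : Matrix (Fin r) (Fin r) ℤ) : Prop :=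
  ∀ z : Fin r → ℤ, ∃ n : ℤ,
    (fun i => (z i : ℚ)) ⬝ᵥ ((M.map (Int.cast : ℤ → ℚ))⁻¹ *ᵥ fun i => (z i : ℚ)) = (n : ℚ)

/-- The symmetric bilinear space `(V, B)` has an orthogonal spanning family with norms `s`. -/
def Diagonalizes (s : Multiset ℚ) (V : Type) [AddCommGroup V] [Module ℚ V]
    (B : LinearMap.BilinForm ℚ V) : Prop :=
  (∀ x y, B x y = B y x) ∧ ∃ vs : List V, ((vs.map fun v => B v v : List ℚ) : Multiset ℚ) = s ∧
    vs.Pairwise (fun x y => B x y = 0) ∧ Submodule.span ℚ {v | v ∈ vs} = ⊤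

namespace Diagonalizes

variable {V : Type} [AddCommGroup V] [Module ℚ V] {B : LinearMap.BilinForm ℚ V}

theorem exists_cons {a : ℚ} {s : Multiset ℚ} (h : Diagonalizes (a ::ₘ s) V B) :
    ∃ (x : V) (vs : List V), B x x = a ∧ ((vs.map fun v => B v v : List ℚ) : Multiset ℚ) = s ∧
      (x :: vs).Pairwise (fun x y => B x y = 0) ∧ Submodule.span ℚ {v | v ∈ x :: vs} = ⊤ := by
  classical
  obtain ⟨hB, vs, hs, ho, hsp⟩ := h
  have ha : a ∈ vs.map fun v => B v v := by
    have : a ∈ a ::ₘ s := Multiset.mem_cons_self a s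
    rw [← hs] at this
    exact this
  obtain ⟨x, hx, rfl⟩ := List.mem_map.1 ha
  have hp : vs.Perm (x :: vs.erase x) := List.perm_cons_erase hx
  refine ⟨x, vs.erase x, rfl, ?_, ?_, ?_⟩
  · have h2 := hp.map fun v => B v v
    rw [← Multiset.coe_eq_coe, hs, List.map_cons, ← Multiset.cons_coe,
      Multiset.cons_inj_right] at h2
    exact h2.symm
  · exact (hp.pairwise_iff (fun {a b} h => by rw [hB, h])).1 ho
  · rw [← hsp]
    congr 1
    ext v
    exact hp.mem_iff.symm

theorem exists_cons_cons {a b : ℚ} {s : Multiset ℚ} (h : Diagonalizes (a ::ₘ b ::ₘ s) V B) :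
    ∃ (x y : V) (vs : List V), B x x = a ∧ B y y = b ∧
      ((vs.map fun v => B v v : List ℚ) : Multiset ℚ) = s ∧
      (x :: y :: vs).Pairwise (fun x y => B x y = 0) ∧
      Submodule.span ℚ {v | v ∈ x :: y :: vs} = ⊤ := by
  classical
  obtain ⟨hB, -⟩ := id h
  obtain ⟨x, vs, hx, hs, ho, hsp⟩ := h.exists_cons
  have hb : b ∈ vs.map fun v => B v v := by
    have : b ∈ b ::ₘ s := Multiset.mem_cons_self b s
    rw [← hs] at this
    exact this
  obtain ⟨y, hy, rfl⟩ := List.mem_map.1 hb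
  have hp : vs.Perm (y :: vs.erase y) := List.perm_cons_erase hy
  have hp' := hp.cons x
  refine ⟨x, y, vs.erase y, hx, rfl, ?_, ?_, ?_⟩
  · have h2 := hp.map fun v => B v v
    rw [← Multiset.coe_eq_coe, hs, List.map_cons, ← Multiset.cons_coe,
      Multiset.cons_inj_right] at h2
    exact h2.symm
  · exact (hp'.pairwise_iff (fun {a b} h => by rw [hB, h])).1 ho
  · rw [← hsp]
    congr 1
    ext v
    exact hp'.mem_iff.symm

theorem smul_cons {a : ℚ} {s : Multiset ℚ} (h : Diagonalizes (a ::ₘ s) V B) {α : ℚ} (hα : α ≠ 0) :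
    Diagonalizes ((a * α ^ 2) ::ₘ s) V B := by
  obtain ⟨hB, -⟩ := id h
  obtain ⟨x, vs, hx, hs, ho, hsp⟩ := h.exists_cons
  rw [List.pairwise_cons] at ho
  refine ⟨hB, (α • x) :: vs, ?_, ?_, ?_⟩
  · rw [List.map_cons, ← Multiset.cons_coe, hs]
    simp only [map_smul, LinearMap.smul_apply, smul_eq_mul, hx]
    congr 1; ring
  · rw [List.pairwise_cons]
    refine ⟨fun y hy => ?_, ho.2⟩
    simp [ho.1 y hy]
  · rw [eq_top_iff, ← hsp, Submodule.span_le]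
    rintro v hv
    rcases List.mem_cons.1 hv with rfl | hv
    · have h1 : α • v ∈ Submodule.span ℚ {w | w ∈ (α • v) :: vs} :=
        Submodule.subset_span (by simp)
      have := Submodule.smul_mem _ α⁻¹ h1
      rwa [smul_smul, inv_mul_cancel₀ hα, one_smul] at this
    · exact Submodule.subset_span (by simp [hv])

theorem change_pair {a b : ℚ} {s : Multiset ℚ} (h : Diagonalizes (a ::ₘ b ::ₘ s) V B)
    (α β γ δ : ℚ) {a' b' : ℚ} (hd : α * δ - β * γ ≠ 0) (ha : a' = α ^ 2 * a + β ^ 2 * b)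
    (hb : b' = γ ^ 2 * a + δ ^ 2 * b) (hab : α * γ * a + β * δ * b = 0) :
    Diagonalizes (a' ::ₘ b' ::ₘ s) V B := by
  obtain ⟨hB, -⟩ := id h
  obtain ⟨x, y, vs, hx, hy, hs, ho, hsp⟩ := h.exists_cons_cons
  simp only [List.pairwise_cons, List.mem_cons, forall_eq_or_imp] at ho
  obtain ⟨⟨hxy, hxv⟩, hyv, ho⟩ := ho
  have hyx : B y x = 0 := by rw [hB, hxy]
  refine ⟨hB, (α • x + β • y) :: (γ • x + δ • y) :: vs, ?_, ?_, ?_⟩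
  · rw [List.map_cons, List.map_cons, ← Multiset.cons_coe, ← Multiset.cons_coe, hs]
    simp only [map_add, map_smul, LinearMap.add_apply, LinearMap.smul_apply, smul_eq_mul, hx, hy,
      hxy, hyx, ha, hb]
    congr 1
    · ring
    · congr 1; ring
  · simp only [List.pairwise_cons, List.mem_cons, forall_eq_or_imp]
    refine ⟨⟨?_, fun v hv => ?_⟩, fun v hv => ?_, ho⟩
    · simp only [map_add, map_smul, LinearMap.add_apply, LinearMap.smul_apply, smul_eq_mul, hx, hy,
        hxy, hyx]
      linarith
    · simp [hxv v hv, hyv v hv]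
    · simp [hxv v hv, hyv v hv]
  · rw [eq_top_iff, ← hsp, Submodule.span_le]
    have h1 : α • x + β • y ∈
        Submodule.span ℚ {w | w ∈ (α • x + β • y) :: (γ • x + δ • y) :: vs} :=
      Submodule.subset_span (by simp)
    have h2 : γ • x + δ • y ∈
        Submodule.span ℚ {w | w ∈ (α • x + β • y) :: (γ • x + δ • y) :: vs} :=
      Submodule.subset_span (by simp)
    have key : ∀ u v : ℚ, u • (α • x + β • y) + v • (γ • x + δ • y) ∈
        Submodule.span ℚ {w | w ∈ (α • x + β • y) :: (γ • x + δ • y) :: vs} := fun u v =>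
      Submodule.add_mem _ (Submodule.smul_mem _ _ h1) (Submodule.smul_mem _ _ h2)
    obtain ⟨d, hdd⟩ : ∃ d, d * (α * δ - β * γ) = 1 := ⟨_, inv_mul_cancel₀ hd⟩
    rintro v hv
    simp only [List.mem_cons, Set.mem_ofPred_eq] at hv
    rcases hv with hv | hv | hv
    · have := key (δ * d) (-β * d)
      have e : v = (δ * d) • (α • x + β • y) +
          (-β * d) • (γ • x + δ • y) := by
        rw [hv]
        match_scalars <;> first | ring1 | linear_combination -hdd
      rw [SetLike.mem_coe, e]
      exact this
    · have := key (-γ * d) (α * d)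
      have e : v = (-γ * d) • (α • x + β • y) +
          (α * d) • (γ • x + δ • y) := by
        rw [hv]
        match_scalars <;> first | ring1 | linear_combination -hdd
      rw [SetLike.mem_coe, e]
      exact this
    · exact Submodule.subset_span (by simp [hv])

theorem smul_cons_iff {a α : ℚ} {s : Multiset ℚ} (hα : α ≠ 0) :
    Diagonalizes ((a * α ^ 2) ::ₘ s) V B ↔ Diagonalizes (a ::ₘ s) V B := by
  refine ⟨fun h => ?_, fun h => h.smul_cons hα⟩
  have := h.smul_cons (inv_ne_zero hα)
  rwa [mul_assoc, ← mul_pow, mul_inv_cancel₀ hα, one_pow, mul_one] at this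

theorem add_pair_iff {a b : ℚ} {s : Multiset ℚ} (ha : a ≠ 0) (hb : b ≠ 0) (hab : a + b ≠ 0) :
    Diagonalizes ((a + b) ::ₘ (a * b * (a + b)) ::ₘ s) V B ↔ Diagonalizes (a ::ₘ b ::ₘ s) V B := by
  constructor
  · intro h
    refine h.change_pair (a / (a + b)) (1 / (a + b)) (b / (a + b)) (-1 / (a + b)) ?_ ?_ ?_ ?_
    · have : a / (a + b) * (-1 / (a + b)) - 1 / (a + b) * (b / (a + b)) = - (1 / (a + b)) := by
        field_simp; ring
      rw [this]
      exact neg_ne_zero.2 (one_div_ne_zero hab)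
    all_goals field_simp
    all_goals ring
  · intro h
    refine h.change_pair 1 1 b (-a) ?_ ?_ ?_ ?_
    · intro h; apply hab; linarith
    all_goals ring

theorem hyperbolic_pair_iff {a : ℚ} {s : Multiset ℚ} (ha : a ≠ 0) :
    Diagonalizes (a ::ₘ (-a) ::ₘ s) V B ↔ Diagonalizes (1 ::ₘ (-1) ::ₘ s) V B := by
  constructor
  · intro h
    refine h.change_pair ((1 / a + 1) / 2) ((1 / a - 1) / 2) ((1 / a - 1) / 2) ((1 / a + 1) / 2)
      ?_ ?_ ?_ ?_
    · have : (1 / a + 1) / 2 * ((1 / a + 1) / 2) - (1 / a - 1) / 2 * ((1 / a - 1) / 2) = 1 / a := by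
        ring
      rw [this]
      exact one_div_ne_zero ha
    all_goals field_simp
    all_goals ring
  · intro h
    refine h.change_pair ((a + 1) / 2) ((a - 1) / 2) ((a - 1) / 2) ((a + 1) / 2) ?_ ?_ ?_ ?_
    · have : (a + 1) / 2 * ((a + 1) / 2) - (a - 1) / 2 * ((a - 1) / 2) = a := by ring
      rw [this]
      exact ha
    all_goals ring

end Diagonalizes

/-- The norms of an orthogonal basis of the hyperbolic plane. -/
def hyperbolicPair : Multiset ℚ := {1, -1}

/-- The signature of a multiset of rational numbers. -/
def signatureSum : Multiset ℚ →+ ℤ :=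
  Multiset.sumAddMonoidHom.comp
    (Multiset.mapAddMonoidHom fun a => ((SignType.sign a : SignType) : ℤ))

theorem signatureSum_singleton (a : ℚ) :
    signatureSum {a} = ((SignType.sign a : SignType) : ℤ) := by
  simp [signatureSum]

/-- Witt equivalence of rational diagonal forms. -/
def wittCon : AddCon (Multiset ℚ) where
  r s t := signatureSum s = signatureSum t ∧ ∃ m n : ℕ, s.card + 2 * m = t.card + 2 * n ∧
    ∀ (c : Multiset ℚ) (V : Type) [AddCommGroup V] [Module ℚ V] (B : LinearMap.BilinForm ℚ V),
      Diagonalizes (s + m • hyperbolicPair + c) V B ↔ Diagonalizes (t + n • hyperbolicPair + c) V B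
  iseqv := by
    refine ⟨fun s => ⟨rfl, 0, 0, rfl, fun _ _ _ _ _ => Iff.rfl⟩, ?_, ?_⟩
    · rintro s t ⟨h, m, n, hc, h'⟩
      exact ⟨h.symm, n, m, hc.symm, fun c V _ _ B => (h' c V B).symm⟩
    · rintro s t u ⟨h, m, n, hc, h'⟩ ⟨h1, m1, n1, hc1, h1'⟩
      refine ⟨h.trans h1, m + m1, n + n1, by omega, fun c V _ _ B => ?_⟩
      have e1 := h' (m1 • hyperbolicPair + c) V B
      have e2 := h1' (n • hyperbolicPair + c) V B
      rw [show s + (m + m1) • hyperbolicPair + c = s + m • hyperbolicPair +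
        (m1 • hyperbolicPair + c) by rw [add_smul]; abel, e1,
        show u + (n + n1) • hyperbolicPair + c = u + n1 • hyperbolicPair +
        (n • hyperbolicPair + c) by rw [add_smul]; abel, ← e2]
      rw [show t + n • hyperbolicPair + (m1 • hyperbolicPair + c) =
        t + m1 • hyperbolicPair + (n • hyperbolicPair + c) by abel]
  add' := by
    rintro s t s' t' ⟨h, m, n, hc, h'⟩ ⟨h1, m1, n1, hc1, h1'⟩
    refine ⟨by rw [map_add, map_add, h, h1], m + m1, n + n1, by simp; omega,
      fun c V _ _ B => ?_⟩
    have e1 := h' (s' + m1 • hyperbolicPair + c) V B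
    have e2 := h1' (t + n • hyperbolicPair + c) V B
    rw [show s + s' + (m + m1) • hyperbolicPair + c = s + m • hyperbolicPair +
      (s' + m1 • hyperbolicPair + c) by rw [add_smul]; abel, e1,
      show t + t' + (n + n1) • hyperbolicPair + c = t' + n1 • hyperbolicPair +
        (t + n • hyperbolicPair + c) by rw [add_smul]; abel, ← e2]
    rw [show t + n • hyperbolicPair + (s' + m1 • hyperbolicPair + c) =
      s' + m1 • hyperbolicPair + (t + n • hyperbolicPair + c) by abel]

/-- The Witt group of rational diagonal forms. -/
abbrev RatWitt : Type := (AddCon.comap (Multiset.mapAddMonoidHom (Units.val : ℚˣ → ℚ))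
  (map_add _) wittCon).Quotient

/-- The Witt class of a diagonal form with nonzero entries. -/
def RatWitt.mk : Multiset ℚˣ →+ RatWitt := AddCon.mk' _

theorem RatWitt.mk_eq_mk {s t : Multiset ℚˣ} :
    RatWitt.mk s = RatWitt.mk t ↔ wittCon (s.map Units.val) (t.map Units.val) :=
  (AddCon.eq _).trans (AddCon.comap_rel _)

/-- The Witt class of the one-dimensional form `⟨a⟩`, with `⟨0⟩` read as `0`. -/
noncomputable def wittClass (a : ℚ) : RatWitt :=
  if h : a = 0 then 0 else RatWitt.mk {Units.mk0 a h}

theorem wittClass_zero : wittClass 0 = 0 := dif_pos rfl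

theorem wittClass_of_ne_zero {a : ℚ} (h : a ≠ 0) :
    wittClass a = RatWitt.mk {Units.mk0 a h} := dif_neg h

theorem wittClass_unit (a : ℚˣ) : wittClass a = RatWitt.mk {a} := by
  rw [wittClass_of_ne_zero a.ne_zero, Units.mk0_val]

theorem sign_mul_sq (a c : ℚ) (hc : c ≠ 0) : SignType.sign (a * c ^ 2) = SignType.sign a := by
  rw [sign_mul, sign_pow]
  have : SignType.sign c ^ 2 = 1 := by
    rcases lt_or_gt_of_ne hc with h | h
    · rw [sign_neg h]; rfl
    · rw [sign_pos h]; rfl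
  rw [this, mul_one]

theorem wittClass_mul_sq (a : ℚ) {c : ℚ} (hc : c ≠ 0) : wittClass (a * c ^ 2) = wittClass a := by
  by_cases ha : a = 0
  · simp [ha]
  rw [wittClass_of_ne_zero ha, wittClass_of_ne_zero (mul_ne_zero ha (pow_ne_zero 2 hc)),
    RatWitt.mk_eq_mk]
  simp only [Multiset.map_singleton, Units.val_mk0]
  refine ⟨?_, 0, 0, by simp, fun s V _ _ B => ?_⟩
  · rw [signatureSum_singleton, signatureSum_singleton, sign_mul_sq a c hc]
  · simp only [zero_smul, add_zero, Multiset.singleton_add]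
    exact Diagonalizes.smul_cons_iff hc

theorem wittClass_add_neg (a : ℚ) : wittClass a + wittClass (-a) = 0 := by
  by_cases ha : a = 0
  · simp [ha, wittClass_zero]
  rw [wittClass_of_ne_zero ha, wittClass_of_ne_zero (neg_ne_zero.2 ha), ← map_add,
    ← map_zero RatWitt.mk, RatWitt.mk_eq_mk]
  simp only [Multiset.map_singleton, Multiset.map_add, Multiset.map_zero, Units.val_mk0]
  refine ⟨?_, 0, 1, by simp, fun s V _ _ B => ?_⟩
  · rw [map_add, map_zero, signatureSum_singleton, signatureSum_singleton, Left.sign_neg]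
    simp
  · simp only [zero_smul, add_zero, one_smul, zero_add, hyperbolicPair,
      Multiset.insert_eq_cons, Multiset.singleton_add, Multiset.cons_add]
    exact Diagonalizes.hyperbolic_pair_iff ha

theorem wittClass_add (a b : ℚ) :
    wittClass a + wittClass b = wittClass (a + b) + wittClass (a * b * (a + b)) := by
  by_cases ha : a = 0
  · simp [ha, wittClass_zero]
  by_cases hb : b = 0
  · simp [hb, wittClass_zero]
  by_cases hab : a + b = 0
  · rw [hab, mul_zero, eq_neg_of_add_eq_zero_right hab, wittClass_add_neg, wittClass_zero, add_zero]
  rw [wittClass_of_ne_zero ha, wittClass_of_ne_zero hb, wittClass_of_ne_zero hab,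
    wittClass_of_ne_zero (mul_ne_zero (mul_ne_zero ha hb) hab), ← map_add, ← map_add,
    RatWitt.mk_eq_mk]
  simp only [Multiset.map_singleton, Multiset.map_add, Units.val_mk0]
  refine ⟨?_, 0, 0, by simp, fun s V _ _ B => ?_⟩
  · simp only [map_add, signatureSum_singleton, sign_mul]
    rcases lt_or_gt_of_ne ha with h | h <;> rcases lt_or_gt_of_ne hb with h' | h' <;>
      rcases lt_or_gt_of_ne hab with h'' | h'' <;>
      first
        | (exfalso; linarith)
        | simp [h, h', h'', sign_neg, sign_pos]
  · simp only [zero_smul, add_zero, Multiset.singleton_add, Multiset.cons_add]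
    exact (Diagonalizes.add_pair_iff ha hb hab).symm

theorem RatWitt.mk_eq_sum (s : Multiset ℚˣ) :
    RatWitt.mk s = (s.map fun a : ℚˣ => wittClass a).sum := by
  induction s using Multiset.induction_on with
  | empty => simp
  | cons a s ih =>
    rw [Multiset.map_cons, Multiset.sum_cons, ← ih, wittClass_unit, ← map_add,
      Multiset.singleton_add]

theorem RatWitt.exists_neg (x : RatWitt) : ∃ y : RatWitt, y + x = 0 := by
  obtain ⟨s, rfl⟩ : ∃ s, RatWitt.mk s = x := AddCon.mk'_surjective x
  induction s using Multiset.induction_on with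
  | empty => exact ⟨0, by simp⟩
  | cons a s ih =>
    obtain ⟨y, hy⟩ := ih
    refine ⟨y + wittClass (-a), ?_⟩
    rw [← Multiset.singleton_add, map_add, ← wittClass_unit, add_assoc, ← add_assoc _ _ (mk s),
      add_comm (wittClass (-a)), wittClass_add_neg, zero_add, hy]

noncomputable instance : AddCommGroup RatWitt :=
  { (inferInstance : AddCommMonoid RatWitt) with
    neg := fun x => (RatWitt.exists_neg x).choose
    neg_add_cancel := fun x => (RatWitt.exists_neg x).choose_spec
    zsmul := @zsmulRec RatWitt _ _ ⟨fun x => (RatWitt.exists_neg x).choose⟩ nsmulRec }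

theorem wittClass_neg (a : ℚ) : wittClass (-a) = - wittClass a :=
  eq_neg_of_add_eq_zero_right (wittClass_add_neg a)

/-- `a` is a nonzero integer all of whose prime divisors are smaller than `n`. -/
def SmoothBelow (n : ℕ) (a : ℤ) : Prop :=
  a ≠ 0 ∧ ∀ q : ℕ, q.Prime → (q : ℤ) ∣ a → q < n

namespace SmoothBelow

theorem mul {n : ℕ} {a b : ℤ} (ha : SmoothBelow n a) (hb : SmoothBelow n b) :
    SmoothBelow n (a * b) :=
  ⟨mul_ne_zero ha.1 hb.1, fun q hq h =>
    ((Nat.prime_iff_prime_int.1 hq).dvd_or_dvd h).elim (ha.2 q hq) (hb.2 q hq)⟩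

theorem neg {n : ℕ} {a : ℤ} (ha : SmoothBelow n a) : SmoothBelow n (-a) :=
  ⟨neg_ne_zero.2 ha.1, fun q hq h => ha.2 q hq (by simpa using h)⟩

theorem of_abs_lt {n : ℕ} {a : ℤ} (h0 : a ≠ 0) (h : |a| < n) : SmoothBelow n a := by
  refine ⟨h0, fun q _ hd => ?_⟩
  have h1 : (q : ℤ) ≤ |a| := Int.le_of_dvd (abs_pos.2 h0) ((dvd_abs _ _).2 hd)
  omega

theorem one {n : ℕ} : SmoothBelow n 1 :=
  ⟨one_ne_zero, fun q hq h => absurd (Int.natCast_dvd_natCast.1 (by exact_mod_cast h))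
    hq.not_dvd_one⟩

theorem pow {n : ℕ} {a : ℤ} (ha : SmoothBelow n a) : ∀ k : ℕ, SmoothBelow n (a ^ k)
  | 0 => by rw [pow_zero]; exact one
  | k + 1 => by rw [pow_succ]; exact (ha.pow k).mul ha

theorem not_dvd {p : ℕ} (hp : p.Prime) {a : ℤ} (ha : SmoothBelow p a) : ¬(p : ℤ) ∣ a :=
  fun h => lt_irrefl _ (ha.2 p hp h)

theorem emod {p : ℕ} (hp : p.Prime) {a : ℤ} (ha : ¬(p : ℤ) ∣ a) :
    SmoothBelow p (a % p) ∧ 0 < a % p ∧ a % p < p := by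
  have hp0 : (0 : ℤ) < p := by exact_mod_cast hp.pos
  have h1 := Int.emod_nonneg a hp0.ne'
  have h2 := Int.emod_lt_of_pos a hp0
  have h3 : a % p ≠ 0 := fun h => ha (Int.dvd_of_emod_eq_zero h)
  refine ⟨of_abs_lt h3 ?_, by omega, h2⟩
  rwa [abs_of_nonneg h1]

end SmoothBelow

/-- The subgroup of the Witt group generated by the forms `⟨a⟩` with `a` smooth. -/
noncomputable def smoothSubgroup (n : ℕ) : AddSubgroup RatWitt :=
  AddSubgroup.closure {x | ∃ a : ℤ, SmoothBelow n a ∧ wittClass a = x}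

theorem wittClass_mem_smoothSubgroup {n : ℕ} {a : ℤ} (ha : SmoothBelow n a) :
    wittClass a ∈ smoothSubgroup n :=
  AddSubgroup.subset_closure ⟨a, ha, rfl⟩

/-- The class of `⟨p u⟩` modulo forms with smooth entries. -/
noncomputable def residueClass (p : ℕ) (u : ℤ) : RatWitt ⧸ smoothSubgroup p :=
  QuotientAddGroup.mk' (smoothSubgroup p) (wittClass ((p * u : ℤ) : ℚ))

theorem mk_wittClass_smooth {n : ℕ} {a : ℤ} (ha : SmoothBelow n a) :
    QuotientAddGroup.mk' (smoothSubgroup n) (wittClass a) = 0 :=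
  (QuotientAddGroup.eq_zero_iff _).2 (wittClass_mem_smoothSubgroup ha)

section Residue

variable {p : ℕ}

theorem residueClass_neg (u : ℤ) : residueClass p (-u) = -residueClass p u := by
  rw [residueClass, residueClass, ← map_neg, ← wittClass_neg]
  congr 2
  push_cast
  ring

theorem residueClass_mul_sq (u : ℤ) {c : ℤ} (hc : c ≠ 0) :
    residueClass p (u * c ^ 2) = residueClass p u := by
  rw [residueClass, residueClass, ← wittClass_mul_sq ((p * u : ℤ) : ℚ) (Int.cast_ne_zero.2 hc)]
  congr 2
  push_cast
  ring

theorem residueClass_shift (hp : p.Prime) {u v c l : ℤ} (hu : SmoothBelow p u)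
    (hv : SmoothBelow p v) (hc : SmoothBelow p c) (hl : l = 0 ∨ SmoothBelow p l)
    (h : u = v + p * l) : residueClass p (u * c) = residueClass p (v * c) := by
  have hp0 : (p : ℚ) ≠ 0 := Nat.cast_ne_zero.2 hp.ne_zero
  rcases hl with rfl | hl
  · simp [h]
  have key := wittClass_add ((p * (v * c) : ℤ) : ℚ) (((l * c : ℤ) : ℚ) * (p : ℚ) ^ 2)
  rw [wittClass_mul_sq _ hp0] at key
  have e1 : ((p * (v * c) : ℤ) : ℚ) + ((l * c : ℤ) : ℚ) * (p : ℚ) ^ 2 =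
      ((p * (u * c) : ℤ) : ℚ) := by
    rw [h]; push_cast; ring
  rw [e1] at key
  have e2 : ((p * (v * c) : ℤ) : ℚ) * (((l * c : ℤ) : ℚ) * (p : ℚ) ^ 2) * ((p * (u * c) : ℤ) : ℚ) =
      ((u * v * l * c : ℤ) : ℚ) * ((p : ℚ) ^ 2 * c) ^ 2 := by
    push_cast; ring
  rw [e2, wittClass_mul_sq _ (mul_ne_zero (pow_ne_zero 2 hp0) (Int.cast_ne_zero.2 hc.1))] at key
  have := congrArg (QuotientAddGroup.mk' (smoothSubgroup p)) key
  rw [map_add, map_add, mk_wittClass_smooth (hl.mul hc),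
    mk_wittClass_smooth (((hu.mul hv).mul hl).mul hc), add_zero, add_zero] at this
  exact this.symm

theorem residueClass_natMod (hp : p.Prime) (n : ℕ) : SmoothBelow p n → ∀ c : ℤ, SmoothBelow p c →
    residueClass p (n * c) = residueClass p (((n % p : ℕ) : ℤ) * c) := by
  induction n using Nat.recOnMul with
  | zero => intro h; exact absurd rfl h.1
  | one => intro _ c _; rw [Nat.mod_eq_of_lt hp.one_lt]
  | prime q hq =>
    intro h c _
    rw [Nat.mod_eq_of_lt (h.2 q hq dvd_rfl)]
  | mul a b iha ihb =>
    intro h c hc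
    have hab := h.1
    push_cast at hab
    have ha : SmoothBelow p a := ⟨left_ne_zero_of_mul hab, fun q hq hd =>
      h.2 q hq (by push_cast; exact hd.mul_right _)⟩
    have hb : SmoothBelow p b := ⟨right_ne_zero_of_mul hab, fun q hq hd =>
      h.2 q hq (by push_cast; exact hd.mul_left _)⟩
    have ha' := SmoothBelow.emod hp (ha.not_dvd hp)
    have hb' := SmoothBelow.emod hp (hb.not_dvd hp)
    have h' := SmoothBelow.emod hp (h.not_dvd hp)
    push_cast at *
    rw [show (a * b * c : ℤ) = a * (b * c) by ring, iha ha _ (hb.mul hc),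
      show ((a % p) * (b * c) : ℤ) = b * ((a % p) * c) by ring, ihb hb _ (ha'.1.mul hc),
      show ((b % p) * ((a % p) * c) : ℤ) = ((a % p) * (b % p)) * c by ring]
    refine residueClass_shift hp (l := (a % p) * (b % p) / p) (ha'.1.mul hb'.1) h'.1 hc ?_ ?_
    · rw [or_iff_not_imp_left]
      intro h0
      have hp0 : (0 : ℤ) < p := by exact_mod_cast hp.pos
      have h1 : (0 : ℤ) ≤ (a % p) * (b % p) / p :=
        Int.ediv_nonneg (mul_nonneg ha'.2.1.le hb'.2.1.le) hp0.le
      refine SmoothBelow.of_abs_lt h0 ?_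
      rw [abs_of_nonneg h1]
      refine Int.ediv_lt_of_lt_mul hp0 ?_
      exact mul_lt_mul'' ha'.2.2 hb'.2.2 ha'.2.1.le hb'.2.1.le
    · rw [Int.mul_emod, add_comm]
      exact (Int.mul_ediv_add_emod _ _).symm

theorem residueClass_emod (hp : p.Prime) {u : ℤ} (hu : SmoothBelow p u) :
    residueClass p u = residueClass p (u % p) := by
  obtain ⟨n, rfl | rfl⟩ := u.eq_nat_or_neg
  · have := residueClass_natMod hp n hu 1 SmoothBelow.one
    rw [mul_one, mul_one] at this
    rw [this]
    simp
  · have hn : SmoothBelow p n := by simpa using hu.neg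
    have := residueClass_natMod hp n hn 1 SmoothBelow.one
    rw [mul_one, mul_one] at this
    rw [residueClass_neg, this, ← residueClass_neg]
    have h1 := SmoothBelow.emod hp (hn.not_dvd hp)
    have h2 := SmoothBelow.emod hp (hu.not_dvd hp)
    have e : (-(n : ℤ)) % p = -(((n % p : ℕ) : ℤ)) + p * 1 := by
      push_cast
      rw [mul_one]
      have : (-(n : ℤ)) % p = (-(n % p : ℤ) + p) % p := by
        rw [Int.add_emod_right]
        exact (Int.ModEq.neg (Int.mod_modEq n p)).symm
      rw [this]
      exact Int.emod_eq_of_lt (by omega) (by omega)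
    have := residueClass_shift hp h2.1 (c := 1) (l := 1) (v := -(((n % p : ℕ) : ℤ)))
      (by push_cast; exact h1.1.neg) SmoothBelow.one (Or.inr SmoothBelow.one) e
    rw [mul_one, mul_one] at this
    exact this.symm

theorem residueClass_congr (hp : p.Prime) {u v : ℤ} (hu : SmoothBelow p u) (hv : SmoothBelow p v)
    (h : u ≡ v [ZMOD p]) : residueClass p u = residueClass p v := by
  rw [residueClass_emod hp hu, residueClass_emod hp hv, h.eq]

theorem residueClass_add (hp : p.Prime) {u v w : ℤ} (hu : SmoothBelow p u) (hv : SmoothBelow p v)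
    (hw : SmoothBelow p w) (h : w ≡ u + v [ZMOD p]) :
    ∃ w', SmoothBelow p w' ∧
      residueClass p u + residueClass p v = residueClass p w + residueClass p w' := by
  have h1 := SmoothBelow.emod hp (hu.not_dvd hp)
  have h2 := SmoothBelow.emod hp (hv.not_dvd hp)
  set r := u % p with hr
  set s := v % p - p with hs
  have hs1 : SmoothBelow p s := SmoothBelow.of_abs_lt (by omega) (by rw [abs_lt]; omega)
  have er : r ≡ u [ZMOD p] := Int.mod_modEq u p
  have es : s ≡ v [ZMOD p] := by
    rw [hs]
    exact ((Int.ModEq.refl _).sub (Int.modEq_zero_iff_dvd.2 dvd_rfl)).trans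
      (by rw [sub_zero]; exact Int.mod_modEq v p)
  have ew : r + s ≡ w [ZMOD p] := (er.add es).trans h.symm
  have hrs : SmoothBelow p (r + s) := by
    refine SmoothBelow.of_abs_lt ?_ (by rw [abs_lt]; omega)
    intro h0
    rw [h0] at ew
    exact hw.not_dvd hp (Int.modEq_zero_iff_dvd.1 ew.symm)
  refine ⟨r * s * (r + s), (h1.1.mul hs1).mul hrs, ?_⟩
  rw [residueClass_congr hp hu h1.1 er.symm, residueClass_congr hp hv hs1 es.symm,
    residueClass_congr hp hw hrs ew.symm]
  have key := wittClass_add ((p * r : ℤ) : ℚ) ((p * s : ℤ) : ℚ)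
  rw [show ((p * r : ℤ) : ℚ) + ((p * s : ℤ) : ℚ) = ((p * (r + s) : ℤ) : ℚ) by push_cast; ring,
    show ((p * r : ℤ) : ℚ) * ((p * s : ℤ) : ℚ) * ((p * (r + s) : ℤ) : ℚ) =
      ((p * (r * s * (r + s)) : ℤ) : ℚ) * (p : ℚ) ^ 2 by push_cast; ring,
    wittClass_mul_sq _ (Nat.cast_ne_zero.2 hp.ne_zero)] at key
  have := congrArg (QuotientAddGroup.mk' (smoothSubgroup p)) key
  rwa [map_add, map_add] at this

theorem exists_residueClass_represent (hp : p.Prime) (l : List (ℤ × ℤ)) :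
    (∀ a ∈ l, SmoothBelow p a.1) → ∀ v, SmoothBelow p v →
    (l.map fun a => a.1 * a.2 ^ 2).sum ≡ v [ZMOD p] →
    ∃ ws : List ℤ, (∀ w ∈ ws, SmoothBelow p w) ∧ ws.length + 1 = l.length ∧
      (l.map fun a => residueClass p a.1).sum =
        residueClass p v + (ws.map (residueClass p)).sum := by
  induction l with
  | nil =>
    intro _ v hv h
    exact absurd (Int.modEq_zero_iff_dvd.1 h.symm) (hv.not_dvd hp)
  | cons a l ih =>
    obtain ⟨u, x⟩ := a
    intro hl v hv h
    simp only [List.mem_cons, forall_eq_or_imp] at hl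
    obtain ⟨hu, hl⟩ := hl
    simp only [List.map_cons, List.sum_cons] at h ⊢
    by_cases hx : (p : ℤ) ∣ x
    · have h' : (l.map fun a => a.1 * a.2 ^ 2).sum ≡ v [ZMOD p] := by
        refine Int.ModEq.trans ?_ h
        conv_lhs => rw [← zero_add (List.sum _)]
        exact Int.ModEq.add_right _
          (Int.modEq_zero_iff_dvd.2 ((hx.pow two_ne_zero).mul_left u)).symm
      obtain ⟨ws, h1, h2, h3⟩ := ih hl v hv h'
      refine ⟨u :: ws, ?_, by simp [h2], ?_⟩
      · simpa using ⟨hu, h1⟩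
      · rw [h3, List.map_cons, List.sum_cons]; abel
    · have hx1 := (SmoothBelow.emod hp hx).1
      have hux : SmoothBelow p (u * (x % p) ^ 2) := hu.mul (hx1.pow 2)
      have eux : u * (x % p) ^ 2 ≡ u * x ^ 2 [ZMOD p] :=
        ((Int.mod_modEq x p).pow 2).mul_left u
      rw [← residueClass_mul_sq u hx1.1]
      by_cases hd : (p : ℤ) ∣ v - u * x ^ 2
      · have e : u * (x % p) ^ 2 ≡ v [ZMOD p] := eux.trans (Int.modEq_iff_dvd.2 hd)
        refine ⟨l.map Prod.fst, ?_, by simp, ?_⟩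
        · intro w hw
          obtain ⟨a, ha, rfl⟩ := List.mem_map.1 hw
          exact hl a ha
        · rw [residueClass_congr hp hux hv e, List.map_map]
          rfl
      · have ht := (SmoothBelow.emod hp hd).1
        have et := Int.mod_modEq (v - u * x ^ 2) p
        obtain ⟨ws, h1, h2, h3⟩ := ih hl _ ht (by
          refine Int.ModEq.trans ?_ et.symm
          have := h.sub_right (u * x ^ 2)
          rwa [add_sub_cancel_left] at this)
        obtain ⟨w', hw', e⟩ := residueClass_add hp hux ht hv (by
          have := (eux.add et).symm
          rwa [add_sub_cancel] at this)
        refine ⟨w' :: ws, ?_, by simp [h2], ?_⟩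
        · simpa using ⟨hw', h1⟩
        · rw [h3, ← add_assoc, e, List.map_cons, List.sum_cons, add_assoc]

theorem exists_shorter_residueClass_sum (hp : p.Prime) (l : List (ℤ × ℤ))
    (hl : ∀ a ∈ l, SmoothBelow p a.1) (h : (p : ℤ) ∣ (l.map fun a => a.1 * a.2 ^ 2).sum)
    (hx : ∃ a ∈ l, ¬(p : ℤ) ∣ a.2) :
    ∃ ws : List ℤ, (∀ w ∈ ws, SmoothBelow p w) ∧ ws.length < l.length ∧
      (l.map fun a => residueClass p a.1).sum = (ws.map (residueClass p)).sum := by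
  obtain ⟨⟨u, x⟩, ha, hx⟩ := hx
  have hperm := List.perm_cons_erase ha
  set l' := l.erase (u, x) with hl'
  have hu : SmoothBelow p u := hl _ ha
  have hx1 := (SmoothBelow.emod hp hx).1
  have e := (hperm.map fun a => a.1 * a.2 ^ 2).sum_eq
  have e' := (hperm.map fun a => residueClass p a.1).sum_eq
  rw [List.map_cons, List.sum_cons] at e e'
  obtain ⟨ws, h1, h2, h3⟩ := exists_residueClass_represent hp l'
    (fun a ha => hl a (List.mem_of_mem_erase ha)) (-(u * (x % p) ^ 2)) (hu.mul (hx1.pow 2)).neg (by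
      rw [e] at h
      have h4 : u * (x % p) ^ 2 ≡ u * x ^ 2 [ZMOD p] := ((Int.mod_modEq x p).pow 2).mul_left u
      refine Int.ModEq.trans ?_ h4.neg.symm
      rw [Int.modEq_iff_dvd]
      rw [sub_eq_add_neg, ← neg_add]
      exact h.neg_right)
  refine ⟨ws, h1, ?_, ?_⟩
  · have := hperm.length_eq
    rw [List.length_cons] at this
    omega
  · rw [e', h3, residueClass_neg, residueClass_mul_sq u hx1.1]
    simp

theorem exists_residueClass_sum (hp : p.Prime) {g : RatWitt} (hg : g ∈ smoothSubgroup (p + 1)) :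
    ∃ us : List ℤ, (∀ u ∈ us, SmoothBelow p u) ∧
      QuotientAddGroup.mk' (smoothSubgroup p) g = (us.map (residueClass p)).sum := by
  induction hg using AddSubgroup.closure_induction with
  | zero => exact ⟨[], by simp, by simp⟩
  | add x y _ _ hx hy =>
    obtain ⟨us, h1, h2⟩ := hx
    obtain ⟨vs, h3, h4⟩ := hy
    refine ⟨us ++ vs, ?_, by rw [map_add, h2, h4, List.map_append, List.sum_append]⟩
    intro u hu
    rcases List.mem_append.1 hu with h | h
    exacts [h1 u h, h3 u h]
  | neg x _ hx =>
    obtain ⟨us, h1, h2⟩ := hx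
    refine ⟨us.map (- ·), ?_, ?_⟩
    · intro u hu
      obtain ⟨v, hv, rfl⟩ := List.mem_map.1 hu
      exact (h1 v hv).neg
    · rw [map_neg, h2, List.map_map]
      clear h1 h2
      induction us with
      | nil => simp
      | cons a us ih =>
        simp only [List.map_cons, List.sum_cons, Function.comp_apply, residueClass_neg,
          neg_add] at ih ⊢
        rw [ih]
  | mem x hx =>
    obtain ⟨a, ha, rfl⟩ := hx
    have hfin : FiniteMultiplicity (p : ℤ) a :=
      Int.finiteMultiplicity_iff.2 ⟨by simpa using hp.ne_one, ha.1⟩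
    obtain ⟨b, hb, hpb⟩ := hfin.exists_eq_pow_mul_and_not_dvd
    set k := multiplicity (p : ℤ) a
    have hb' : SmoothBelow p b := by
      refine ⟨fun h => hpb (h ▸ dvd_zero _), fun q hq hd => ?_⟩
      have h1 := ha.2 q hq (hb ▸ hd.mul_left _)
      rcases Nat.lt_succ_iff_lt_or_eq.1 h1 with h | h
      · exact h
      · exact absurd (h ▸ hd) hpb
    have hp0 : (p : ℚ) ≠ 0 := Nat.cast_ne_zero.2 hp.ne_zero
    obtain ⟨m, hm | hm⟩ := Nat.even_or_odd' k
    · refine ⟨[], by simp, ?_⟩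
      rw [hb, hm, show ((((p : ℤ) ^ (2 * m) * b : ℤ)) : ℚ) = (b : ℚ) * ((p : ℚ) ^ m) ^ 2 by
        push_cast; ring, wittClass_mul_sq _ (pow_ne_zero m hp0), mk_wittClass_smooth hb']
      simp
    · refine ⟨[b], by simpa using hb', ?_⟩
      rw [hb, hm, show ((((p : ℤ) ^ (2 * m + 1) * b : ℤ)) : ℚ) =
        ((p * b : ℤ) : ℚ) * ((p : ℚ) ^ m) ^ 2 by push_cast; ring,
        wittClass_mul_sq _ (pow_ne_zero m hp0)]
      simp [residueClass]

theorem mem_smoothSubgroup_of_succ_prime (hp : p.Prime) {g : RatWitt}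
    (hg : g ∈ smoothSubgroup (p + 1))
    (H : ∀ us : List ℤ, us ≠ [] → (∀ u ∈ us, SmoothBelow p u) →
      QuotientAddGroup.mk' (smoothSubgroup p) g = (us.map (residueClass p)).sum →
      ∃ l : List (ℤ × ℤ), l.map Prod.fst = us ∧ (p : ℤ) ∣ (l.map fun a => a.1 * a.2 ^ 2).sum ∧
        ∃ a ∈ l, ¬(p : ℤ) ∣ a.2) :
    g ∈ smoothSubgroup p := by
  obtain ⟨us, h1, h2⟩ := exists_residueClass_sum hp hg
  generalize hn : us.length = n
  induction n using Nat.strong_induction_on generalizing us with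
  | _ n ih =>
    by_cases h0 : us = []
    · rw [h0] at h2
      exact (QuotientAddGroup.eq_zero_iff _).1 (by simpa using h2)
    · obtain ⟨l, rfl, hl, hx⟩ := H us h0 h1 h2
      obtain ⟨ws, h3, h4, h5⟩ := exists_shorter_residueClass_sum hp l
        (fun a ha => h1 _ (List.mem_map_of_mem ha)) hl hx
      refine ih ws.length (by rw [← hn]; simpa using h4) ws h3 ?_ rfl
      rw [h2, List.map_map, ← h5]
      rfl

theorem smoothSubgroup_succ_of_not_prime {n : ℕ} (hn : ¬n.Prime) :
    smoothSubgroup (n + 1) ≤ smoothSubgroup n := by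
  refine (AddSubgroup.closure_le _).2 ?_
  rintro _ ⟨a, ha, rfl⟩
  refine wittClass_mem_smoothSubgroup ⟨ha.1, fun q hq hd => ?_⟩
  rcases Nat.lt_succ_iff_lt_or_eq.1 (ha.2 q hq hd) with h | h
  · exact h
  · exact absurd (h ▸ hq) hn

end Residue

section OrthogonalFamily

variable {V : Type} [AddCommGroup V] [Module ℚ V] {B : LinearMap.BilinForm ℚ V}

theorem eq_sum_of_orthogonal {T : Type} [Fintype T] {v : T → V} {c : T → ℚ}
    (ho : ∀ i j, i ≠ j → B (v i) (v j) = 0) (hc : ∀ i, B (v i) (v i) = c i) (h0 : ∀ i, c i ≠ 0)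
    (hsp : Submodule.span ℚ (Set.range v) = ⊤) (x : V) :
    x = ∑ i, (B x (v i) / c i) • v i := by
  classical
  have hx : x ∈ Submodule.span ℚ (Set.range v) := hsp ▸ Submodule.mem_top
  induction hx using Submodule.span_induction with
  | mem x hx =>
    obtain ⟨j, rfl⟩ := hx
    rw [Finset.sum_eq_single j]
    · rw [hc, div_self (h0 j), one_smul]
    · intro i _ hi
      rw [ho j i (Ne.symm hi), zero_div, zero_smul]
    · simp
  | zero => simp
  | add x y _ _ hx hy =>
    conv_lhs => rw [hx, hy]
    rw [← Finset.sum_add_distrib]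
    refine Finset.sum_congr rfl fun i _ => ?_
    rw [map_add, LinearMap.add_apply, add_div, add_smul]
  | smul a x _ hx =>
    conv_lhs => rw [hx]
    rw [Finset.smul_sum]
    refine Finset.sum_congr rfl fun i _ => ?_
    rw [map_smul, LinearMap.smul_apply, smul_smul, smul_eq_mul, mul_div_assoc]

theorem norm_eq_sum_of_orthogonal {T : Type} [Fintype T] {v : T → V} {c : T → ℚ}
    (ho : ∀ i j, i ≠ j → B (v i) (v j) = 0) (hc : ∀ i, B (v i) (v i) = c i) (h0 : ∀ i, c i ≠ 0)
    (hsp : Submodule.span ℚ (Set.range v) = ⊤) (x : V) :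
    B x x = ∑ i, B x (v i) ^ 2 / c i := by
  conv_lhs => rw [eq_sum_of_orthogonal ho hc h0 hsp x]
  rw [← eq_sum_of_orthogonal ho hc h0 hsp x]
  conv_lhs => rhs; rw [eq_sum_of_orthogonal ho hc h0 hsp x]
  rw [map_sum]
  refine Finset.sum_congr rfl fun i _ => ?_
  rw [map_smul, smul_eq_mul]
  ring

theorem nondegenerate_of_orthogonal (hB : ∀ x y, B x y = B y x) {T : Type} [Fintype T] {v : T → V}
    {c : T → ℚ} (ho : ∀ i j, i ≠ j → B (v i) (v j) = 0) (hc : ∀ i, B (v i) (v i) = c i)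
    (h0 : ∀ i, c i ≠ 0) (hsp : Submodule.span ℚ (Set.range v) = ⊤) : B.Nondegenerate := by
  have h : ∀ x, (∀ y, B x y = 0) → x = 0 := fun x hx => by
    rw [eq_sum_of_orthogonal ho hc h0 hsp x]
    exact Finset.sum_eq_zero fun i _ => by rw [hx, zero_div, zero_smul]
  exact ⟨h, fun y hy => h y fun x => by rw [hB, hy]⟩

theorem mem_of_forall_dual (hB : ∀ x y, B x y = B y x) (hnd : B.Nondegenerate) (L : Submodule ℤ V)
    (hfg : L.FG) (hsp : Submodule.span ℚ (L : Set V) = ⊤) {x : V}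
    (hx : ∀ z, (∀ y ∈ L, ∃ n : ℤ, B z y = n) → ∃ n : ℤ, B x z = n) : x ∈ L := by
  have : Submodule.IsLattice ℚ L := ⟨hfg, hsp⟩
  have b := Module.Free.chooseBasis ℤ L
  have hb : Submodule.span ℤ (Set.range (b.extendOfIsLattice ℚ)) = L := by
    have : Set.range (b.extendOfIsLattice ℚ) = L.subtype '' Set.range b := by
      rw [← Set.range_comp]
      congr 1
      ext i
      simp
    rw [this, ← Submodule.map_span, b.span_eq, Submodule.map_top, Submodule.range_subtype]
  have key := LinearMap.BilinForm.dualSubmodule_dualSubmodule_of_basis (R := ℤ) B hnd ⟨hB⟩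
    (b.extendOfIsLattice ℚ)
  rw [hb] at key
  rw [← key, LinearMap.BilinForm.mem_dualSubmodule]
  intro z hz
  obtain ⟨n, hn⟩ := hx z fun y hy => by
    obtain ⟨n, hn⟩ := Submodule.mem_one.1 (hz y hy)
    exact ⟨n, by rw [← hn]; simp⟩
  exact Submodule.mem_one.2 ⟨n, by rw [hn]; simp⟩

end OrthogonalFamily

/-- The bilinear space contains a self-dual integral lattice. -/
def HasUnimodularLattice (V : Type) [AddCommGroup V] [Module ℚ V]
    (B : LinearMap.BilinForm ℚ V) : Prop :=
  ∃ L : Submodule ℤ V, L.FG ∧ Submodule.span ℚ (L : Set V) = ⊤ ∧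
    ∀ x, x ∈ L ↔ ∀ y ∈ L, ∃ n : ℤ, B x y = n

theorem HasUnimodularLattice.exists_isotropic_mod {V : Type} [AddCommGroup V] [Module ℚ V]
    {B : LinearMap.BilinForm ℚ V} (hU : HasUnimodularLattice V B) (hB : ∀ x y, B x y = B y x)
    {p : ℕ} (hp : p.Prime) {ι κ : Type} [Fintype ι] [Fintype κ] [Nonempty ι] {u : ι → ℤ}
    {a : κ → ℤ} (hu : ∀ i, ¬(p : ℤ) ∣ u i) (ha : ∀ j, ¬(p : ℤ) ∣ a j) {v : ι ⊕ κ → V}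
    (ho : ∀ i j, i ≠ j → B (v i) (v j) = 0) (hι : ∀ i, B (v (.inl i)) (v (.inl i)) = p * u i)
    (hκ : ∀ j, B (v (.inr j)) (v (.inr j)) = a j) (hsp : Submodule.span ℚ (Set.range v) = ⊤) :
    ∃ x : ι → ℤ, (p : ℤ) ∣ ∑ i, u i * x i ^ 2 ∧ ∃ i, ¬(p : ℤ) ∣ x i := by
  classical
  obtain ⟨L, hfg, hLsp, hL⟩ := hU
  have hpZ : Prime (p : ℤ) := Nat.prime_iff_prime_int.1 hp
  have hu0 : ∀ i, u i ≠ 0 := fun i h => hu i (h ▸ dvd_zero _)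
  have ha0 : ∀ i, a i ≠ 0 := fun i h => ha i (h ▸ dvd_zero _)
  set c : ι ⊕ κ → ℤ := Sum.elim (fun i => p * u i) a with hcdef
  have hc : ∀ i, B (v i) (v i) = (c i : ℚ) := by
    rintro (i | j)
    · rw [hι]; simp [hcdef]
    · rw [hκ]; simp [hcdef]
  have hc0 : ∀ i, c i ≠ 0 := by
    rintro (i | j)
    · exact mul_ne_zero hpZ.ne_zero (hu0 i)
    · exact ha0 j
  have hcQ : ∀ i, (c i : ℚ) ≠ 0 := fun i => Int.cast_ne_zero.2 (hc0 i)
  have expand := eq_sum_of_orthogonal ho hc hcQ hsp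
  have hnd := nondegenerate_of_orthogonal hB ho hc hcQ hsp
  set n : ℤ := (∏ i, u i) * ∏ j, a j with hn
  have hpn : ¬(p : ℤ) ∣ n := by
    rw [hn, hpZ.dvd_mul, hpZ.dvd_finsetProd_iff, hpZ.dvd_finsetProd_iff]
    rintro (⟨i, -, h⟩ | ⟨i, -, h⟩)
    exacts [hu i h, ha i h]
  have hun : ∀ i, u i ∣ n := fun i => (Finset.dvd_prod_of_mem u (Finset.mem_univ i)).mul_right _
  have han : ∀ i, a i ∣ n := fun i => (Finset.dvd_prod_of_mem a (Finset.mem_univ i)).mul_left _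
  set D : Submodule ℤ V := Submodule.span ℤ (Set.range v) with hD
  -- Elements of `D` pair with `v i` in `c i * ℤ`.
  have hDpair : ∀ x ∈ D, ∀ i, ∃ k : ℤ, B x (v i) = c i * k := by
    intro x hx i
    induction hx using Submodule.span_induction with
    | mem x hx =>
      obtain ⟨j, rfl⟩ := hx
      by_cases hj : j = i
      · exact ⟨1, by rw [hj, hc]; simp⟩
      · exact ⟨0, by rw [ho j i hj]; simp⟩
    | zero => exact ⟨0, by simp⟩
    | add x y _ _ hx hy =>
      obtain ⟨k, hk⟩ := hx
      obtain ⟨l, hl⟩ := hy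
      exact ⟨k + l, by rw [map_add, LinearMap.add_apply, hk, hl]; push_cast; ring⟩
    | smul r x _ hx =>
      obtain ⟨k, hk⟩ := hx
      exact ⟨r * k, by rw [map_zsmul, LinearMap.smul_apply, hk]; push_cast; simp; ring⟩
  have hDmem : ∀ x, (∀ i, ∃ k : ℤ, B x (v i) = c i * k) → x ∈ D := by
    intro x hx
    rw [expand x]
    refine Submodule.sum_mem _ fun i _ => ?_
    obtain ⟨k, hk⟩ := hx i
    rw [hk, mul_div_cancel_left₀ _ (hcQ i), Int.cast_smul_eq_zsmul]
    exact D.smul_mem k (Submodule.subset_span ⟨i, rfl⟩)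
  obtain ⟨x, hxL, hxv, hxD⟩ : ∃ x ∈ L, (∀ i, ∃ k : ℤ, B x (v i) = k) ∧ n • x ∉ D := by
    by_contra! hcon
    have hsub : ∀ y, (∀ i, ∃ k : ℤ, B y (v i) = k) → (n * n) • y ∈ D := by
      intro y hy
      have hmem : n • y ∈ D ⊔ L := by
        refine mem_of_forall_dual hB hnd (D ⊔ L)
          (Submodule.FG.sup (Submodule.fg_span (Set.finite_range v)) hfg) ?_ ?_
        · rw [eq_top_iff, ← hLsp]
          exact Submodule.span_mono fun z hz => Submodule.mem_sup_right hz
        · intro z hz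
          have hzL : z ∈ L := (hL z).2 fun w hw => hz w (Submodule.mem_sup_right hw)
          have hzD := hcon z hzL fun i =>
            hz _ (Submodule.mem_sup_left (Submodule.subset_span ⟨i, rfl⟩))
          have : ∀ w ∈ D, ∃ k : ℤ, B y w = k := by
            intro w hw
            induction hw using Submodule.span_induction with
            | mem w hw => obtain ⟨i, rfl⟩ := hw; exact hy i
            | zero => exact ⟨0, by simp⟩
            | add a b _ _ ha hb =>
              obtain ⟨k, hk⟩ := ha
              obtain ⟨l, hl⟩ := hb
              exact ⟨k + l, by rw [map_add, hk, hl]; push_cast; ring⟩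
            | smul r x _ hx =>
              obtain ⟨k, hk⟩ := hx
              exact ⟨r * k, by rw [map_zsmul, hk]; push_cast; simp⟩
          obtain ⟨k, hk⟩ := this _ hzD
          refine ⟨k, ?_⟩
          rw [← hk, map_zsmul, map_zsmul, LinearMap.smul_apply]
      obtain ⟨d, hd, l, hl, hdl⟩ := Submodule.mem_sup.1 hmem
      have h1 : n • l ∈ D := by
        refine hcon l hl fun i => ?_
        obtain ⟨k, hk⟩ := hDpair d hd i
        obtain ⟨m, hm⟩ := hy i
        have : l = n • y - d := by rw [← hdl]; abel
        refine ⟨n * m - c i * k, ?_⟩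
        rw [this, map_sub, LinearMap.sub_apply, map_zsmul, LinearMap.smul_apply, hk, hm]
        push_cast
        simp
      rw [mul_smul, ← hdl, smul_add]
      exact D.add_mem (D.smul_mem n hd) h1
    obtain ⟨i⟩ := ‹Nonempty ι›
    have hpQ : (p : ℚ) ≠ 0 := Nat.cast_ne_zero.2 hp.ne_zero
    have h1 := hsub ((p : ℚ)⁻¹ • v (.inl i)) (by
      intro j
      by_cases hj : Sum.inl i = j
      · refine ⟨u i, ?_⟩
        rw [← hj, map_smul, LinearMap.smul_apply, hι, smul_eq_mul, inv_mul_cancel_left₀ hpQ]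
      · exact ⟨0, by rw [map_smul, LinearMap.smul_apply, ho _ _ hj]; simp⟩)
    obtain ⟨k, hk⟩ := hDpair _ h1 (.inl i)
    rw [map_zsmul, LinearMap.smul_apply, map_smul, LinearMap.smul_apply, hι, smul_eq_mul,
      inv_mul_cancel_left₀ hpQ] at hk
    have h2 : (n * n) * u i = p * u i * k := by
      have : (((n * n) * u i : ℤ) : ℚ) = ((p * u i * k : ℤ) : ℚ) := by
        rw [zsmul_eq_mul] at hk
        push_cast at hk ⊢
        simpa [hcdef] using hk
      exact_mod_cast this
    have h3 : (p : ℤ) ∣ n * n * u i := ⟨u i * k, by rw [h2]; ring⟩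
    rcases hpZ.dvd_or_dvd h3 with h | h
    · rcases hpZ.dvd_or_dvd h with h | h <;> exact hpn h
    · exact hu i h
  clear_value n
  choose β hβ using hxv
  choose m hm using hun
  choose m' hm' using han
  refine ⟨fun i => β (.inl i) * m i, ?_, ?_⟩
  · obtain ⟨q, hq⟩ := (hL x).1 hxL x hxL
    have h1 := norm_eq_sum_of_orthogonal ho hc hcQ hsp x
    rw [hq, Fintype.sum_sum_type] at h1
    have hpQ : (p : ℚ) ≠ 0 := Nat.cast_ne_zero.2 hp.ne_zero
    have h2 : (∑ i, u i * (β (.inl i) * m i) ^ 2 : ℤ) =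
        p * (n ^ 2 * q - ∑ j, a j * (β (.inr j) * m' j) ^ 2) := by
      have h3 : ((∑ i, u i * (β (.inl i) * m i) ^ 2 : ℤ) : ℚ) =
          p * n ^ 2 * ∑ i, B x (v (.inl i)) ^ 2 / c (.inl i) := by
        rw [Finset.mul_sum]
        push_cast
        refine Finset.sum_congr rfl fun i _ => ?_
        have : (u i : ℚ) ≠ 0 := Int.cast_ne_zero.2 (hu0 i)
        have e : (n : ℚ) = u i * m i := by rw [hm i]; push_cast; ring
        rw [hβ, e]
        simp only [hcdef, Sum.elim_inl]
        push_cast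
        field_simp
      have h4 : ((∑ j, a j * (β (.inr j) * m' j) ^ 2 : ℤ) : ℚ) =
          n ^ 2 * ∑ i, B x (v (.inr i)) ^ 2 / c (.inr i) := by
        rw [Finset.mul_sum]
        push_cast
        refine Finset.sum_congr rfl fun i _ => ?_
        have : (a i : ℚ) ≠ 0 := Int.cast_ne_zero.2 (ha0 i)
        have e : (n : ℚ) = a i * m' i := by rw [hm' i]; push_cast; ring
        rw [hβ, e]
        simp only [hcdef, Sum.elim_inr]
        field_simp
      have h5 : ((∑ i, u i * (β (.inl i) * m i) ^ 2 : ℤ) : ℚ) =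
          ((p * (n ^ 2 * q - ∑ j, a j * (β (.inr j) * m' j) ^ 2) : ℤ) : ℚ) := by
        rw [h3, Int.cast_mul, Int.cast_sub, h4, Int.cast_mul, h1]
        push_cast
        ring
      exact_mod_cast h5
    exact ⟨_, h2⟩
  · by_contra! hall
    refine hxD (hDmem _ ?_)
    rintro (i | j)
    · obtain ⟨k, hk⟩ := hall i
      refine ⟨k, ?_⟩
      have h1 : n * β (.inl i) = p * u i * k := by
        rw [hm i]; linear_combination u i * hk
      rw [map_zsmul, LinearMap.smul_apply, hβ, zsmul_eq_mul]
      simp only [hcdef, Sum.elim_inl]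
      exact_mod_cast h1
    · refine ⟨m' j * β (.inr j), ?_⟩
      have h1 : n * β (.inr j) = a j * (m' j * β (.inr j)) := by
        rw [hm' j]; ring
      rw [map_zsmul, LinearMap.smul_apply, hβ, zsmul_eq_mul]
      simp only [hcdef, Sum.elim_inr]
      exact_mod_cast h1

section Extension

variable {V : Type} [AddCommGroup V] [Module ℚ V]

/-- The orthogonal sum of `(V, B)` and the one-dimensional form `⟨a⟩`. -/
noncomputable def extendForm (B : LinearMap.BilinForm ℚ V) (a : ℚ) :
    LinearMap.BilinForm ℚ (V × ℚ) :=
  B.compl₁₂ (LinearMap.fst ℚ V ℚ) (LinearMap.fst ℚ V ℚ) +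
    a • (LinearMap.mul ℚ ℚ).compl₁₂ (LinearMap.snd ℚ V ℚ) (LinearMap.snd ℚ V ℚ)

variable {B : LinearMap.BilinForm ℚ V}

theorem extendForm_apply (a : ℚ) (x y : V × ℚ) :
    extendForm B a x y = B x.1 y.1 + a * (x.2 * y.2) := by
  simp [extendForm]

theorem extendForm_symm (hB : ∀ x y, B x y = B y x) (a : ℚ) (x y : V × ℚ) :
    extendForm B a x y = extendForm B a y x := by
  rw [extendForm_apply, extendForm_apply, hB, mul_comm x.2]

theorem Diagonalizes.extend {s : Multiset ℚ} (h : Diagonalizes s V B) (a : ℚ) :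
    Diagonalizes (a ::ₘ s) (V × ℚ) (extendForm B a) := by
  obtain ⟨hB, vs, hs, ho, hsp⟩ := h
  refine ⟨extendForm_symm hB a, (0, 1) :: vs.map fun v => (v, 0), ?_, ?_, ?_⟩
  · rw [List.map_cons, ← Multiset.cons_coe, List.map_map, ← hs]
    simp [extendForm_apply, Function.comp_def]
  · rw [List.pairwise_cons]
    refine ⟨fun w hw => ?_, List.pairwise_map.2 (ho.imp fun {x y} h => ?_)⟩
    · obtain ⟨v, _, rfl⟩ := List.mem_map.1 hw
      simp [extendForm_apply]
    · simp [extendForm_apply, h]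
  · rw [eq_top_iff]
    rintro ⟨x, t⟩ -
    have h1 : (x, (0 : ℚ)) ∈ Submodule.span ℚ {w | w ∈ (0, 1) :: vs.map fun v => (v, (0 : ℚ))} := by
      have hx : x ∈ Submodule.span ℚ {v | v ∈ vs} := hsp ▸ Submodule.mem_top
      have := Submodule.mem_map_of_mem (f := LinearMap.inl ℚ V ℚ) hx
      rw [Submodule.map_span] at this
      refine Submodule.span_mono ?_ this
      rintro _ ⟨v, hv, rfl⟩
      exact List.mem_cons_of_mem _ (List.mem_map_of_mem hv)
    have h2 : ((0 : V), (1 : ℚ)) ∈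
        Submodule.span ℚ {w | w ∈ (0, 1) :: vs.map fun v => (v, (0 : ℚ))} :=
      Submodule.subset_span List.mem_cons_self
    have := Submodule.add_mem _ h1 (Submodule.smul_mem _ t h2)
    simpa using this

/-- Witt cancellation of a one-dimensional form. -/
theorem Diagonalizes.cancel {s : Multiset ℚ} {a : ℚ} (ha : a ≠ 0)
    (h : Diagonalizes (a ::ₘ s) (V × ℚ) (extendForm B a)) : Diagonalizes s V B := by
  obtain ⟨hE, -⟩ := id h
  obtain ⟨w, vs, hw, hs, ho, hsp⟩ := h.exists_cons
  rw [List.pairwise_cons] at ho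
  set E := extendForm B a with hEdef
  set e : V × ℚ := (0, 1) with he
  have hee : E e e = a := by simp [hEdef, extendForm_apply, he]
  have hEe : ∀ x, E x e = a * x.2 := fun x => by simp [hEdef, extendForm_apply, he]
  have hB : ∀ x y, B x y = B y x := fun x y => by
    have := hE (x, 0) (y, 0)
    simpa [hEdef, extendForm_apply] using this
  obtain ⟨ε, hε, hu⟩ : ∃ ε : ℚ, ε ^ 2 = 1 ∧ E (w + ε • e) (w + ε • e) ≠ 0 := by
    by_contra! hcon
    have h1 := hcon 1 (by norm_num)
    have h2 := hcon (-1) (by norm_num)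
    simp only [map_add, map_smul, LinearMap.add_apply, LinearMap.smul_apply, smul_eq_mul, hw, hee,
      hE e w] at h1 h2
    exact ha (by linarith)
  set u := w + ε • e with hudef
  set d := E u u with hd
  have hd2 : d = 2 * E w u := by
    rw [hd]
    simp only [hudef, map_add, map_smul, LinearMap.add_apply, LinearMap.smul_apply, smul_eq_mul, hw,
      hee, hE e w]
    linear_combination a * hε
  let σ : V × ℚ →ₗ[ℚ] V × ℚ := LinearMap.id - (2 / d) • (E u).smulRight u
  have hσ : ∀ x, σ x = x - (2 * E x u / d) • u := fun x => by
    simp only [σ, LinearMap.sub_apply, LinearMap.id_apply, LinearMap.smul_apply,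
      LinearMap.smulRight_apply, smul_smul, hE u x]
    congr 2; ring
  have hσE : ∀ x y, E (σ x) (σ y) = E x y := fun x y => by
    rw [hσ, hσ]
    simp only [map_sub, map_smul, LinearMap.sub_apply, LinearMap.smul_apply, smul_eq_mul,
      hE u y, ← hd]
    field_simp
    ring
  have hσσ : ∀ x, σ (σ x) = x := fun x => by
    rw [hσ (σ x), hσ x]
    simp only [map_sub, map_smul, LinearMap.sub_apply, LinearMap.smul_apply, smul_eq_mul, ← hd]
    rw [div_mul_cancel₀ _ hu]
    match_scalars <;> field_simp <;> ring
  have hσw : σ w = (-ε) • e := by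
    rw [hσ, ← hd2, div_self hu, hudef]
    module
  have hσ2 : ∀ v ∈ vs, (σ v).2 = 0 := fun v hv => by
    have h1 := hσE v w
    rw [hE v w, ho.1 v hv, hσw, map_smul, hEe, smul_eq_mul] at h1
    have hε0 : ε ≠ 0 := fun h => by simp [h] at hε
    simpa [ha, hε0] using h1
  have hBσ : ∀ x ∈ vs, ∀ y ∈ vs, B (σ x).1 (σ y).1 = E x y := fun x hx y hy => by
    rw [← hσE x y, hEdef, extendForm_apply, hσ2 x hx]
    ring
  refine ⟨hB, vs.map fun v => (σ v).1, ?_, ?_, ?_⟩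
  · rw [← hs, List.map_map]
    congr 1
    exact List.map_congr_left fun v hv => hBσ v hv v hv
  · rw [List.pairwise_map]
    exact ho.2.imp_of_mem fun {x y} hx hy h => by rw [hBσ x hx y hy, h]
  · rw [eq_top_iff]
    rintro x -
    have hx : σ (x, 0) ∈ Submodule.span ℚ {v | v ∈ w :: vs} := hsp ▸ Submodule.mem_top
    have := Submodule.mem_map_of_mem (f := (LinearMap.fst ℚ V ℚ).comp σ) hx
    rw [Submodule.map_span, LinearMap.comp_apply, hσσ] at this
    refine (Submodule.span_le.2 ?_) this
    rintro _ ⟨v, hv, rfl⟩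
    rcases List.mem_cons.1 hv with rfl | hv
    · rw [LinearMap.comp_apply, hσw]
      simp [he]
    · exact Submodule.subset_span (List.mem_map.2 ⟨v, hv, rfl⟩)

theorem HasUnimodularLattice.extend (h : HasUnimodularLattice V B) {a : ℤ} (ha : a ^ 2 = 1) :
    HasUnimodularLattice (V × ℚ) (extendForm B a) := by
  obtain ⟨L, hfg, hsp, hL⟩ := h
  have hz : ∀ t : ℚ, t ∈ Submodule.span ℤ {(1 : ℚ)} ↔ ∃ n : ℤ, t = n := fun t => by
    rw [Submodule.mem_span_singleton]
    exact ⟨fun ⟨n, hn⟩ => ⟨n, by rw [← hn]; simp⟩, fun ⟨n, hn⟩ => ⟨n, by rw [hn]; simp⟩⟩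
  refine ⟨L.prod (Submodule.span ℤ {1}), hfg.prod (Submodule.fg_span_singleton _), ?_, ?_⟩
  · rw [eq_top_iff]
    rintro ⟨x, t⟩ -
    have h1 : (x, (0 : ℚ)) ∈ Submodule.span ℚ
        ((L.prod (Submodule.span ℤ {1}) : Submodule ℤ (V × ℚ)) : Set (V × ℚ)) := by
      have hx : x ∈ Submodule.span ℚ (L : Set V) := hsp ▸ Submodule.mem_top
      have := Submodule.mem_map_of_mem (f := LinearMap.inl ℚ V ℚ) hx
      rw [Submodule.map_span] at this
      refine Submodule.span_mono ?_ this
      rintro _ ⟨v, hv, rfl⟩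
      exact ⟨hv, Submodule.zero_mem _⟩
    have h2 : ((0 : V), (1 : ℚ)) ∈ Submodule.span ℚ
        ((L.prod (Submodule.span ℤ {1}) : Submodule ℤ (V × ℚ)) : Set (V × ℚ)) :=
      Submodule.subset_span ⟨Submodule.zero_mem _, Submodule.mem_span_singleton_self _⟩
    have := Submodule.add_mem _ h1 (Submodule.smul_mem _ t h2)
    simpa using this
  · rintro ⟨x, t⟩
    rw [Submodule.mem_prod]
    simp only [hz, Prod.forall, extendForm_apply, Submodule.mem_prod]
    constructor
    · rintro ⟨hx, n, rfl⟩ y s ⟨hy, m, rfl⟩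
      obtain ⟨k, hk⟩ := (hL x).1 hx y hy
      exact ⟨k + a * (n * m), by rw [hk]; push_cast; ring⟩
    · intro h
      constructor
      · refine (hL x).2 fun y hy => ?_
        obtain ⟨n, hn⟩ := h y 0 ⟨hy, 0, by simp⟩
        exact ⟨n, by simpa using hn⟩
      · obtain ⟨n, hn⟩ := h 0 1 ⟨L.zero_mem, 1, by simp⟩
        refine ⟨a * n, ?_⟩
        have ha' : (a : ℚ) ^ 2 = 1 := by exact_mod_cast ha
        simp only [map_zero, zero_add, mul_one] at hn
        push_cast
        rw [← hn]
        linear_combination -t * ha'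

end Extension

theorem exists_add_hyperbolicPair (m : ℕ) (V : Type) [AddCommGroup V] [Module ℚ V]
    (B : LinearMap.BilinForm ℚ V) (hU : HasUnimodularLattice V B) :
    ∃ (V' : Type) (_ : AddCommGroup V') (_ : Module ℚ V') (B' : LinearMap.BilinForm ℚ V'),
      HasUnimodularLattice V' B' ∧
      ∀ s, Diagonalizes (s + m • hyperbolicPair) V' B' ↔ Diagonalizes s V B := by
  induction m with
  | zero => exact ⟨V, _, _, B, hU, fun s => by simp⟩
  | succ m ih =>
    obtain ⟨V', i1, i2, B', hU', h⟩ := ih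
    refine ⟨(V' × ℚ) × ℚ, inferInstance, inferInstance,
      extendForm (extendForm B' ((-1 : ℤ) : ℚ)) ((1 : ℤ) : ℚ),
      (hU'.extend (by norm_num)).extend (by norm_num), fun s => ?_⟩
    rw [← h]
    have e : s + (m + 1) • hyperbolicPair =
        ((1 : ℤ) : ℚ) ::ₘ ((-1 : ℤ) : ℚ) ::ₘ (s + m • hyperbolicPair) := by
      rw [add_smul, one_smul, hyperbolicPair, ← add_assoc, add_comm]
      simp
    rw [e]
    constructor
    · intro h'
      exact (h'.cancel (by norm_num)).cancel (by norm_num)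
    · intro h'
      exact (h'.extend _).extend _

theorem exists_perm_map_eq {α β : Type} (f : α → β) (m : List β) : ∀ l : List α,
    (l.map f).Perm m → ∃ l' : List α, l'.Perm l ∧ l'.map f = m := by
  classical
  induction m with
  | nil => intro l h; exact ⟨l, List.Perm.refl _, List.perm_nil.1 h⟩
  | cons b m ih =>
    intro l h
    obtain ⟨a, ha, rfl⟩ := List.mem_map.1 (h.mem_iff.2 List.mem_cons_self)
    have h1 := List.perm_cons_erase ha
    obtain ⟨l', h2, h3⟩ := ih (l.erase a) (by
      have := (h1.map f).symm.trans h
      rw [List.map_cons] at this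
      exact (List.perm_cons _).1 this)
    exact ⟨a :: l', (h2.cons a).trans h1.symm, by rw [List.map_cons, h3]⟩

theorem Diagonalizes.exists_list {V : Type} [AddCommGroup V] [Module ℚ V]
    {B : LinearMap.BilinForm ℚ V} {l : List ℚ} (h : Diagonalizes l V B) :
    ∃ vs : List V, vs.map (fun v => B v v) = l ∧ vs.Pairwise (fun x y => B x y = 0) ∧
      Submodule.span ℚ {v | v ∈ vs} = ⊤ := by
  obtain ⟨hB, vs, hs, ho, hsp⟩ := h
  obtain ⟨vs', h1, h2⟩ := exists_perm_map_eq _ l vs (Multiset.coe_eq_coe.1 hs)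
  refine ⟨vs', h2, (h1.pairwise_iff (fun {a b} h => by rw [hB, h])).2 ho, ?_⟩
  rw [← hsp]
  congr 1
  ext v
  exact h1.mem_iff

theorem exists_list_of_mem_smoothSubgroup {n : ℕ} {g : RatWitt} (hg : g ∈ smoothSubgroup n) :
    ∃ l : List ℤ, (∀ a ∈ l, SmoothBelow n a) ∧
      g = (l.map fun a : ℤ => wittClass (a : ℚ)).sum := by
  induction hg using AddSubgroup.closure_induction with
  | zero => exact ⟨[], by simp, by simp⟩
  | add x y _ _ hx hy =>
    obtain ⟨us, h1, h2⟩ := hx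
    obtain ⟨vs, h3, h4⟩ := hy
    refine ⟨us ++ vs, ?_, by rw [h2, h4, List.map_append, List.sum_append]⟩
    intro u hu
    rcases List.mem_append.1 hu with h | h
    exacts [h1 u h, h3 u h]
  | neg x hx0 hx =>
    clear hx0
    obtain ⟨us, h1, rfl⟩ := hx
    refine ⟨us.map (- ·), ?_, ?_⟩
    · intro u hu
      obtain ⟨v, hv, rfl⟩ := List.mem_map.1 hu
      exact (h1 v hv).neg
    · rw [List.map_map]
      clear h1
      induction us with
      | nil => simp
      | cons a us ih =>
        simp only [List.map_cons, List.sum_cons, Function.comp_apply, Int.cast_neg, wittClass_neg,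
          neg_add] at ih ⊢
        rw [ih]
  | mem x hx =>
    obtain ⟨a, ha, rfl⟩ := hx
    exact ⟨[a], by simpa using ha, by simp⟩

theorem exists_units_multiset (l : List ℤ) (hl : ∀ a ∈ l, a ≠ 0) :
    ∃ s : Multiset ℚˣ, s.map Units.val = ((l.map (Int.cast : ℤ → ℚ) : List ℚ) : Multiset ℚ) ∧
      RatWitt.mk s = (l.map fun a : ℤ => wittClass (a : ℚ)).sum := by
  induction l with
  | nil => exact ⟨0, by simp, by simp⟩
  | cons a l ih =>
    obtain ⟨s, h1, h2⟩ := ih fun b hb => hl b (List.mem_cons_of_mem _ hb)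
    have ha : (a : ℚ) ≠ 0 := Int.cast_ne_zero.2 (hl a List.mem_cons_self)
    refine ⟨Units.mk0 (a : ℚ) ha ::ₘ s, ?_, ?_⟩
    · rw [Multiset.map_cons, h1]; simp
    · rw [List.map_cons, List.sum_cons, ← h2, ← Multiset.singleton_add, map_add,
        wittClass_of_ne_zero ha]

section Descent

variable {V : Type} [AddCommGroup V] [Module ℚ V] {B : LinearMap.BilinForm ℚ V}

theorem HasUnimodularLattice.mem_smoothSubgroup_of_succ (hU : HasUnimodularLattice V B)
    {s : Multiset ℚˣ} (hs : Diagonalizes (s.map Units.val) V B) {p : ℕ} (hp : p.Prime)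
    (hg : RatWitt.mk s ∈ smoothSubgroup (p + 1)) : RatWitt.mk s ∈ smoothSubgroup p := by
  refine mem_smoothSubgroup_of_succ_prime hp hg fun us hne hus hsum => ?_
  have hmem : RatWitt.mk s - (us.map fun u : ℤ => wittClass ((p * u : ℤ) : ℚ)).sum ∈
      smoothSubgroup p := by
    rw [← QuotientAddGroup.eq_zero_iff]
    change QuotientAddGroup.mk' (smoothSubgroup p) _ = 0
    rw [map_sub, hsum, map_list_sum, List.map_map, sub_eq_zero]
    rfl
  obtain ⟨as, has, hsum'⟩ := exists_list_of_mem_smoothSubgroup hmem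
  rw [sub_eq_iff_eq_add] at hsum'
  obtain ⟨s', h1, h2⟩ := exists_units_multiset (us.map (fun u : ℤ => (p : ℤ) * u) ++ as) (by
    intro a ha
    rcases List.mem_append.1 ha with h | h
    · obtain ⟨u, hu, rfl⟩ := List.mem_map.1 h
      exact mul_ne_zero (by exact_mod_cast hp.ne_zero) (hus u hu).1
    · exact (has a h).1)
  have h3 : RatWitt.mk s = RatWitt.mk s' := by
    rw [hsum', h2, List.map_append, List.sum_append, List.map_map, add_comm]
    rfl
  obtain ⟨-, m, n, -, hmn⟩ := RatWitt.mk_eq_mk.1 h3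
  obtain ⟨V', i1, i2, B', hU', h4⟩ := exists_add_hyperbolicPair m V B hU
  have h5 := (h4 _).2 hs
  have h6 := hmn 0 V' B'
  rw [add_zero, add_zero] at h6
  rw [h6, h1] at h5
  obtain ⟨hB, -⟩ := id h5
  have h7 : ((List.map (Int.cast : ℤ → ℚ) (us.map (fun u : ℤ => (p : ℤ) * u) ++ as) : List ℚ) :
      Multiset ℚ) +
      n • hyperbolicPair = ((us.map (fun u : ℤ => (p * u : ℚ)) ++
        (as ++ (List.replicate n [(1 : ℤ), -1]).flatten).map (Int.cast : ℤ → ℚ) : List ℚ) :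
          Multiset ℚ) := by
    have : ∀ n : ℕ, n • hyperbolicPair = (((List.replicate n [(1 : ℤ), -1]).flatten.map
        (Int.cast : ℤ → ℚ) : List ℚ) : Multiset ℚ) := by
      intro n
      clear * -
      induction n with
      | zero => simp
      | succ n ih =>
        rw [add_smul, ih, List.replicate_succ, List.flatten_cons, List.map_append,
          ← Multiset.coe_add, add_comm, one_smul]
        congr 1
    rw [this, List.map_append, List.map_append, List.map_map, Multiset.coe_add, List.append_assoc]
    congr 2
    refine List.map_congr_left fun u _ => ?_
    simp
  rw [h7] at h5
  set as' := as ++ (List.replicate n [(1 : ℤ), -1]).flatten with has'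
  have hasp : ∀ a ∈ as', ¬(p : ℤ) ∣ a := by
    intro a ha
    rcases List.mem_append.1 ha with h | h
    · exact (has a h).not_dvd hp
    · obtain ⟨l, hl, hal⟩ := List.mem_flatten.1 h
      rw [List.eq_of_mem_replicate hl] at hal
      have hp1 := hp.one_lt
      have h1 : ¬(p : ℤ) ∣ 1 := fun h => by
        have := Int.le_of_dvd one_pos h
        omega
      simp only [List.mem_cons, List.not_mem_nil, or_false] at hal
      rcases hal with rfl | rfl
      · exact h1
      · rwa [dvd_neg]
  obtain ⟨vs, hvs, ho, hsp⟩ := h5.exists_list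
  obtain ⟨vs1, vs2, rfl, hvs1, hvs2⟩ := List.map_eq_append_iff.1 hvs
  have hl1 : us.length = vs1.length := by simpa using (congrArg List.length hvs1).symm
  have hl2 : as'.length = vs2.length := by simpa using (congrArg List.length hvs2).symm
  rw [List.pairwise_append] at ho
  have hne' : Nonempty (Fin us.length) := ⟨⟨0, List.length_pos_iff.2 hne⟩⟩
  have hsymm : ∀ {l : List V'} {n : ℕ} (h : n = l.length),
      l.Pairwise (fun x y => B' x y = 0) → ∀ i j : Fin n, i ≠ j →
      B' (l.get (i.cast h)) (l.get (j.cast h)) = 0 := by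
    intro l n h hl i j hij
    rcases lt_or_gt_of_ne hij with h' | h'
    · exact List.pairwise_iff_get.1 hl _ _ h'
    · rw [hB]
      exact List.pairwise_iff_get.1 hl _ _ h'
  obtain ⟨x, hx, hx'⟩ := hU'.exists_isotropic_mod hB hp (ι := Fin us.length) (κ := Fin as'.length)
    (u := us.get) (a := as'.get) (fun i => (hus _ (List.get_mem _ _)).not_dvd hp)
    (fun i => hasp _ (List.get_mem _ _))
    (v := Sum.elim (fun i => vs1.get (i.cast hl1)) (fun i => vs2.get (i.cast hl2))) (by
      rintro (i | i) (j | j) hij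
      · exact hsymm hl1 ho.1 i j fun h => hij (by rw [h])
      · exact ho.2.2 _ (List.get_mem _ _) _ (List.get_mem _ _)
      · simp only [Sum.elim_inl, Sum.elim_inr]
        rw [hB]
        exact ho.2.2 _ (List.get_mem _ _) _ (List.get_mem _ _)
      · exact hsymm hl2 ho.2.1 i j fun h => hij (by rw [h]))
    (fun i => by
      have := List.getElem_of_eq hvs1 (i := i) (by simp [← hl1])
      simpa using this)
    (fun i => by
      have := List.getElem_of_eq hvs2 (i := i) (by simp [← hl2])
      simpa using this)
    (by
      rw [← hsp]
      congr 1
      ext v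
      rw [Set.Sum.elim_range, Set.mem_union, Set.mem_ofPred_eq, List.mem_append]
      refine or_congr ?_ ?_
      · rw [List.mem_iff_get]
        exact ⟨fun ⟨i, hi⟩ => ⟨i.cast hl1, hi⟩, fun ⟨i, hi⟩ => ⟨i.cast hl1.symm, hi⟩⟩
      · rw [List.mem_iff_get]
        exact ⟨fun ⟨i, hi⟩ => ⟨i.cast hl2, hi⟩, fun ⟨i, hi⟩ => ⟨i.cast hl2.symm, hi⟩⟩)
  refine ⟨List.ofFn fun i => (us.get i, x i), ?_, ?_, ?_⟩
  · rw [List.map_ofFn]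
    exact List.ofFn_get us
  · rw [List.map_ofFn, List.sum_ofFn]
    exact hx
  · obtain ⟨i, hi⟩ := hx'
    exact ⟨(us.get i, x i), List.mem_ofFn.2 ⟨i, rfl⟩, hi⟩

theorem smoothSubgroup_mono {m n : ℕ} (h : m ≤ n) : smoothSubgroup m ≤ smoothSubgroup n := by
  refine (AddSubgroup.closure_le _).2 ?_
  rintro _ ⟨a, ha, rfl⟩
  exact wittClass_mem_smoothSubgroup ⟨ha.1, fun q hq hd => (ha.2 q hq hd).trans_le h⟩

theorem exists_mem_smoothSubgroup (g : RatWitt) : ∃ n, g ∈ smoothSubgroup n := by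
  obtain ⟨s, rfl⟩ : ∃ s, RatWitt.mk s = g := AddCon.mk'_surjective g
  induction s using Multiset.induction_on with
  | empty => exact ⟨0, by rw [map_zero]; exact AddSubgroup.zero_mem _⟩
  | cons a s ih =>
    obtain ⟨n, hn⟩ := ih
    rw [← Multiset.singleton_add, map_add, ← wittClass_unit]
    set b : ℤ := (a : ℚ).num * (a : ℚ).den with hb
    have hd : ((a : ℚ).den : ℚ) ≠ 0 := Nat.cast_ne_zero.2 (a : ℚ).den_ne_zero
    have e : wittClass (a : ℚ) = wittClass (b : ℚ) := by
      rw [← wittClass_mul_sq (a : ℚ) hd, hb]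
      congr 1
      push_cast
      rw [pow_two, ← mul_assoc, Rat.mul_den_eq_num]
    have hb0 : b ≠ 0 := mul_ne_zero (Rat.num_ne_zero.2 a.ne_zero)
      (by exact_mod_cast (a : ℚ).den_ne_zero)
    refine ⟨max n (b.natAbs + 1), AddSubgroup.add_mem _ ?_
      (smoothSubgroup_mono (le_max_left _ _) hn)⟩
    rw [e]
    refine smoothSubgroup_mono (le_max_right _ _)
      (wittClass_mem_smoothSubgroup (SmoothBelow.of_abs_lt hb0 ?_))
    rw [Int.abs_eq_natAbs]
    push_cast
    exact lt_add_one _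

theorem HasUnimodularLattice.mem_smoothSubgroup_two (hU : HasUnimodularLattice V B)
    {s : Multiset ℚˣ} (hs : Diagonalizes (s.map Units.val) V B) :
    RatWitt.mk s ∈ smoothSubgroup 2 := by
  obtain ⟨n, hn⟩ := exists_mem_smoothSubgroup (RatWitt.mk s)
  have key : ∀ k, RatWitt.mk s ∈ smoothSubgroup (2 + k) → RatWitt.mk s ∈ smoothSubgroup 2 := by
    intro k
    induction k with
    | zero => exact id
    | succ k ih =>
      intro h
      apply ih
      by_cases hp : (2 + k).Prime
      · exact hU.mem_smoothSubgroup_of_succ hs hp h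
      · exact smoothSubgroup_succ_of_not_prime hp h
  exact key n (smoothSubgroup_mono (Nat.le_add_left _ _) hn)

end Descent

theorem exists_replicate_of_mem_smoothSubgroup_two {g : RatWitt} (hg : g ∈ smoothSubgroup 2) :
    ∃ (n : ℕ) (ε : ℚˣ), (ε = 1 ∨ ε = -1) ∧ g = RatWitt.mk (Multiset.replicate n ε) := by
  have h : smoothSubgroup 2 ≤ AddSubgroup.zmultiples (wittClass 1) := by
    refine (AddSubgroup.closure_le _).2 ?_
    rintro _ ⟨a, ha, rfl⟩
    have h1 : a.natAbs = 1 := by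
      by_contra h
      obtain ⟨q, hq, hd⟩ := Nat.exists_prime_and_dvd h
      exact absurd (ha.2 q hq (Int.natCast_dvd.2 hd)) (not_lt.2 hq.two_le)
    rcases Int.natAbs_eq a with h | h
    · rw [h, h1]
      simp
    · rw [h, h1]
      simp [wittClass_neg]
  have hrep : ∀ (n : ℕ) (ε : ℚˣ), RatWitt.mk (Multiset.replicate n ε) = n • wittClass ε := by
    intro n ε
    rw [RatWitt.mk_eq_sum, Multiset.map_replicate, Multiset.sum_replicate]
  obtain ⟨k, rfl⟩ := AddSubgroup.mem_zmultiples_iff.1 (h hg)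
  obtain ⟨n, rfl | rfl⟩ := k.eq_nat_or_neg
  · exact ⟨n, 1, Or.inl rfl, by rw [hrep, natCast_zsmul, Units.val_one]⟩
  · refine ⟨n, -1, Or.inr rfl, ?_⟩
    rw [hrep, neg_smul, natCast_zsmul, Units.val_neg, Units.val_one, wittClass_neg, smul_neg]

theorem abs_signatureSum_le (s : Multiset ℚ) : |signatureSum s| ≤ s.card := by
  induction s using Multiset.induction_on with
  | empty => simp
  | cons a s ih =>
    rw [← Multiset.singleton_add, map_add, signatureSum_singleton, Multiset.card_add,
      Multiset.card_singleton]
    have : |((SignType.sign a : SignType) : ℤ)| ≤ 1 := by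
      rcases SignType.sign a with _ | _ | _ <;> decide
    have := abs_add_le ((SignType.sign a : SignType) : ℤ) (signatureSum s)
    push_cast
    linarith

theorem signatureSum_replicate (n : ℕ) (a : ℚ) :
    signatureSum (Multiset.replicate n a) = n * ((SignType.sign a : SignType) : ℤ) := by
  induction n with
  | zero => simp
  | succ n ih =>
    rw [Multiset.replicate_succ, ← Multiset.singleton_add, map_add, ih, signatureSum_singleton]
    push_cast
    ring

theorem exists_isotropic_of_hasUnimodularLattice {V : Type} [AddCommGroup V] [Module ℚ V]
    [FiniteDimensional ℚ V] {B : LinearMap.BilinForm ℚ V} (hU : HasUnimodularLattice V B)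
    (hB : ∀ x y, B x y = B y x) (hpos : ∃ x, 0 < B x x) (hneg : ∃ x, B x x < 0) :
    ∃ x, x ≠ 0 ∧ B x x = 0 := by
  classical
  by_contra! hcon
  obtain ⟨b, hb⟩ := LinearMap.BilinForm.exists_orthogonal_basis (B := B) ⟨hB⟩
  have ho : ∀ i j, i ≠ j → B (b i) (b j) = 0 := fun i j hij => hb hij
  have h0 : ∀ i, B (b i) (b i) ≠ 0 := fun i => hcon _ (b.ne_zero i)
  have hsum := norm_eq_sum_of_orthogonal ho (fun i => rfl) h0 b.span_eq
  obtain ⟨i, hi⟩ : ∃ i, 0 < B (b i) (b i) := by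
    by_contra! h
    obtain ⟨x, hx⟩ := hpos
    rw [hsum x] at hx
    refine absurd hx (not_lt.2 (Finset.sum_nonpos fun i _ => ?_))
    exact div_nonpos_of_nonneg_of_nonpos (sq_nonneg _) (h i)
  obtain ⟨j, hj⟩ : ∃ i, B (b i) (b i) < 0 := by
    by_contra! h
    obtain ⟨x, hx⟩ := hneg
    rw [hsum x] at hx
    refine absurd hx (not_lt.2 (Finset.sum_nonneg fun i _ => ?_))
    exact div_nonneg (sq_nonneg _) (h i)
  have hij : j ≠ i := fun h => by rw [h] at hj; exact lt_asymm hi hj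
  let f : Fin (Module.finrank ℚ V) → ℚˣ := fun i => Units.mk0 _ (h0 i)
  set s : Multiset ℚˣ := Finset.univ.val.map f with hs
  have hsv : s.map Units.val = Finset.univ.val.map fun i => B (b i) (b i) := by
    rw [hs, Multiset.map_map]
    rfl
  have hdiag : Diagonalizes (s.map Units.val) V B := by
    refine ⟨hB, List.ofFn b, ?_, ?_, ?_⟩
    · rw [hsv, List.map_ofFn, Fin.univ_val_map]
      rfl
    · rw [List.pairwise_ofFn]
      exact fun i j h => ho i j h.ne
    · rw [← b.span_eq]
      congr 1
      ext v
      simp [List.mem_ofFn]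
  obtain ⟨n, ε, hε, hmk⟩ :=
    exists_replicate_of_mem_smoothSubgroup_two (hU.mem_smoothSubgroup_two hdiag)
  obtain ⟨hsig, k, l, hcard, hiff⟩ := RatWitt.mk_eq_mk.1 hmk
  have hn : |signatureSum (s.map Units.val)| = n := by
    rw [hsig, Multiset.map_replicate, signatureSum_replicate]
    rcases hε with rfl | rfl
    · simp
    · simp
  have hlt : (n : ℤ) + 2 ≤ (s.map Units.val).card := by
    obtain ⟨t, ht⟩ : ∃ t, s.map Units.val = B (b i) (b i) ::ₘ B (b j) (b j) ::ₘ t := by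
      refine ⟨((Finset.univ.erase i).erase j).val.map fun i => B (b i) (b i), ?_⟩
      have e : (Finset.univ : Finset (Fin (Module.finrank ℚ V))).val =
          i ::ₘ j ::ₘ ((Finset.univ.erase i).erase j).val := by
        rw [← Finset.insert_val_of_notMem (Finset.notMem_erase j _),
          Finset.insert_erase (by simp [hij]),
          ← Finset.insert_val_of_notMem (Finset.notMem_erase i _), Finset.insert_erase (by simp)]
      rw [hsv, e, Multiset.map_cons, Multiset.map_cons]
    rw [← hn, ht, ← Multiset.singleton_add, ← Multiset.singleton_add, map_add, map_add,
      signatureSum_singleton, signatureSum_singleton, sign_pos hi, sign_neg hj]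
    have := abs_signatureSum_le t
    simp only [SignType.coe_one, SignType.coe_neg_one, Multiset.card_add, Multiset.card_singleton]
    push_cast
    rw [show (1 : ℤ) + (-1 + signatureSum t) = signatureSum t by ring]
    linarith
  rw [Multiset.card_map] at hlt
  simp only [Multiset.card_map, Multiset.card_replicate] at hcard
  obtain ⟨V', i1, i2, B', -, h4⟩ := exists_add_hyperbolicPair k V B hU
  have h5 := (h4 _).2 hdiag
  have h6 := hiff 0 V' B'
  rw [add_zero, add_zero] at h6
  obtain ⟨d, rfl⟩ : ∃ d, l = 1 + d + k := ⟨l - k - 1, by omega⟩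
  rw [h6, add_smul, ← add_assoc, h4, add_smul, one_smul, add_left_comm] at h5
  simp only [hyperbolicPair, Multiset.insert_eq_cons, Multiset.singleton_add,
    Multiset.cons_add] at h5
  obtain ⟨-, h⟩ := id h5
  obtain ⟨x, y, vs, hx, hy, -, ho, -⟩ := h5.exists_cons_cons
  have hxy : B x y = 0 := List.rel_of_pairwise_cons ho List.mem_cons_self
  refine hcon (x + y) ?_ ?_
  · intro h
    have : B x (x + y) = 0 := by rw [h, map_zero]
    rw [map_add, hx, hxy] at this
    norm_num at this
  · simp only [map_add, LinearMap.add_apply, hx, hy, hxy, hB y x]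
    norm_num

/-- A symmetric integral form inducing a surjection onto the dual lattice. -/
structure IsUnimodular {L : Type} [AddCommGroup L] (B : LinearMap.BilinForm ℤ L) : Prop where
  symm : ∀ x y, B x y = B y x
  surj : ∀ f : L →ₗ[ℤ] ℤ, ∃ x, ∀ y, B x y = f y

theorem IsUnimodular.exists_isotropic {L : Type} [AddCommGroup L] [Module.Free ℤ L]
    [Module.Finite ℤ L] {B : LinearMap.BilinForm ℤ L} (hB : IsUnimodular B)
    (hpos : ∃ x, 0 < B x x) (hneg : ∃ x, B x x < 0) : ∃ x, x ≠ 0 ∧ B x x = 0 := by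
  classical
  set b := Module.Free.chooseBasis ℤ L with hb
  set I := Module.Free.ChooseBasisIndex ℤ L
  let ι : L →ₗ[ℤ] (Fin (Fintype.card I) → ℚ) :=
    { toFun := fun x i => (b.repr x ((Fintype.equivFin I).symm i) : ℚ)
      map_add' := fun x y => by ext; simp
      map_smul' := fun c x => by ext; simp }
  set e := (Fintype.equivFin I).symm
  have hι : ∀ x i, ι x i = (b.repr x (e i) : ℚ) := fun x i => rfl
  let B' : LinearMap.BilinForm ℚ (Fin (Fintype.card I) → ℚ) :=
    Matrix.toBilin' (Matrix.of fun i j => (B (b (e i)) (b (e j)) : ℚ))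
  have hB' : ∀ x y, B' (ι x) (ι y) = B x y := by
    intro x y
    rw [Matrix.toBilin'_apply, ← (b.reindex e.symm).sum_repr x, ← (b.reindex e.symm).sum_repr y]
    simp only [map_sum, LinearMap.sum_apply, map_smul, LinearMap.smul_apply, hι]
    push_cast
    simp [Finsupp.single_apply, mul_assoc]
    simp only [Finset.mul_sum]
    rw [Finset.sum_comm]
    exact Finset.sum_congr rfl fun i _ => Finset.sum_congr rfl fun j _ => by ring
  have hsymm : ∀ v w, B' v w = B' w v := by
    intro v w
    simp only [B', Matrix.toBilin'_apply, Matrix.of_apply]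
    rw [Finset.sum_comm]
    refine Finset.sum_congr rfl fun i _ => Finset.sum_congr rfl fun j _ => ?_
    rw [hB.symm]
    ring
  have hbasis : ∀ i, ι (b (e i)) = Pi.single i 1 := by
    intro i
    ext j
    rw [hι, b.repr_self, Finsupp.single_apply, Pi.single_apply]
    simp [eq_comm]
  have hspan : Submodule.span ℚ (Set.range ι) = ⊤ := by
    rw [eq_top_iff, ← (Pi.basisFun ℚ (Fin (Fintype.card I))).span_eq]
    refine Submodule.span_mono ?_
    rintro _ ⟨i, rfl⟩
    exact ⟨b (e i), by rw [hbasis, Pi.basisFun_apply]⟩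
  have hnd : ∀ v, (∀ y, B' v (ι y) = 0) → v = 0 := by
    intro v hv
    ext i
    obtain ⟨x, hx⟩ := hB.surj (b.coord (e i))
    have : B' (ι x) = LinearMap.proj i := by
      refine LinearMap.ext_on hspan ?_
      rintro _ ⟨y, rfl⟩
      rw [hB', hx]
      rfl
    have h := hv x
    rw [hsymm, this] at h
    exact h
  have hU : HasUnimodularLattice _ B' := by
    refine ⟨LinearMap.range ι, ?_, ?_, ?_⟩
    · rw [LinearMap.range_eq_map]
      exact Module.Finite.fg_top.map _
    · exact hspan
    · intro v
      constructor
      · rintro ⟨x, rfl⟩ _ ⟨y, rfl⟩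
        exact ⟨B x y, hB' x y⟩
      · intro h
        choose n hn using fun i => h (ι (b i)) ⟨b i, rfl⟩
        obtain ⟨x, hx⟩ := hB.surj (b.constr ℤ n)
        refine ⟨x, ?_⟩
        rw [← sub_eq_zero]
        refine hnd _ fun y => ?_
        rw [map_sub, LinearMap.sub_apply, hB']
        have key : ((Int.castAddHom ℚ).toIntLinearMap.comp (B x)) =
            ((B' v).restrictScalars ℤ).comp ι := by
          refine b.ext fun i => ?_
          change ((B x (b i) : ℤ) : ℚ) = B' v (ι (b i))
          rw [hx, b.constr_basis, hn]
        have := LinearMap.congr_fun key y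
        change ((B x y : ℤ) : ℚ) = B' v (ι y) at this
        rw [this, sub_self]
  obtain ⟨v, hv, hv0⟩ := exists_isotropic_of_hasUnimodularLattice hU hsymm
    (by obtain ⟨x, hx⟩ := hpos; exact ⟨ι x, by rw [hB']; exact_mod_cast hx⟩)
    (by obtain ⟨x, hx⟩ := hneg; exact ⟨ι x, by rw [hB']; exact_mod_cast hx⟩)
  obtain ⟨d, hd⟩ := IsLocalization.exist_integer_multiples_of_finite (nonZeroDivisors ℤ) v
  have hd0 : ((d : ℤ) : ℚ) ≠ 0 := Int.cast_ne_zero.2 (nonZeroDivisors.ne_zero d.2)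
  choose n hn using hd
  have hx : ι (∑ i, n i • b (e i)) = ((d : ℤ) : ℚ) • v := by
    ext j
    simp only [map_sum, map_smul, hbasis, Finset.sum_apply, Pi.smul_apply]
    have := hn j
    simp [Pi.single_apply] at this ⊢
    exact this
  refine ⟨∑ i, n i • b (e i), ?_, ?_⟩
  · intro h
    rw [h, map_zero] at hx
    exact smul_ne_zero hd0 hv hx.symm
  · have := hB' (∑ i, n i • b (e i)) (∑ i, n i • b (e i))
    rw [hx, map_smul, map_smul, LinearMap.smul_apply, hv0, smul_zero, smul_zero] at this
    exact_mod_cast this.symm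

section Lorentzian

variable {L : Type} [AddCommGroup L] [Module.Free ℤ L] [Module.Finite ℤ L]
  {B : LinearMap.BilinForm ℤ L}

omit [Module.Finite ℤ L] in
theorem IsUnimodular.eq_zero (hB : IsUnimodular B) {x : L} (hx : ∀ y, B x y = 0) : x = 0 := by
  set b := Module.Free.chooseBasis ℤ L
  refine b.ext_elem fun i => ?_
  obtain ⟨u, hu⟩ := hB.surj (b.coord i)
  have := hu x
  rw [hB.symm, hx] at this
  rw [map_zero, Finsupp.zero_apply]
  exact this.symm

omit [Module.Finite ℤ L] in
theorem IsUnimodular.exists_dual_pair (hB : IsUnimodular B) (h : ∃ x, x ≠ 0 ∧ B x x = 0) :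
    ∃ e f, B e e = 0 ∧ B e f = 1 := by
  obtain ⟨x, hx0, hx⟩ := h
  obtain ⟨d, hd⟩ := Submodule.IsPrincipal.principal (LinearMap.range (B x))
  have hdvd : ∀ y, ∃ c : ℤ, c * d = B x y := fun y => by
    have : B x y ∈ Submodule.span ℤ {d} := hd ▸ ⟨y, rfl⟩
    exact Submodule.mem_span_singleton.1 this
  have hd0 : d ≠ 0 := by
    rintro rfl
    refine hx0 (hB.eq_zero fun y => ?_)
    obtain ⟨c, hc⟩ := hdvd y
    rw [← hc, mul_zero]
  choose g hg using hdvd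
  obtain ⟨e, he⟩ := hB.surj
    { toFun := g
      map_add' := fun y z => mul_right_cancel₀ hd0 (by rw [add_mul, hg, hg, hg, map_add])
      map_smul' := fun c y => mul_right_cancel₀ hd0 (by
        rw [hg, map_smul, ← hg, smul_eq_mul, RingHom.id_apply, smul_eq_mul, mul_assoc]) }
  have he' : ∀ y, B e y = g y := he
  have hde : d • e = x := by
    rw [← sub_eq_zero]
    refine hB.eq_zero fun y => ?_
    rw [map_sub, map_smul, LinearMap.sub_apply, LinearMap.smul_apply, he', ← hg, smul_eq_mul,
      mul_comm, sub_self]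
  obtain ⟨f, hf⟩ : d ∈ LinearMap.range (B x) := hd ▸ Submodule.mem_span_singleton_self d
  refine ⟨e, f, ?_, ?_⟩
  · rw [← hde, map_smul, map_smul, LinearMap.smul_apply, smul_eq_mul, smul_eq_mul] at hx
    simpa [hd0] using hx
  · refine mul_right_cancel₀ hd0 ?_
    rw [he', hg, hf, one_mul]

omit [Module.Free ℤ L] [Module.Finite ℤ L] in
theorem exists_odd_dual (hB : ∀ x y, B x y = B y x) (hodd : ∃ x, ¬Even (B x x)) {e f : L}
    (he : B e e = 0) (hef : B e f = 1) :
    ∃ f', B f' f' = 1 ∧ B e f' = 1 := by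
  obtain ⟨f, hef, m, hm⟩ : ∃ f, B e f = 1 ∧ Odd (B f f) := by
    by_cases h : Odd (B f f)
    · exact ⟨f, hef, h⟩
    obtain ⟨t, ht⟩ := hodd
    rw [Int.not_odd_iff_even] at h
    rw [Int.not_even_iff_odd] at ht
    refine ⟨t + (1 - B e t) • f, ?_, ?_⟩
    · rw [map_add, map_smul, hef, smul_eq_mul]
      ring
    · have : B (t + (1 - B e t) • f) (t + (1 - B e t) • f) =
          B t t + ((1 - B e t) ^ 2 * B f f + 2 * ((1 - B e t) * B t f)) := by
        simp only [map_add, map_smul, LinearMap.add_apply, LinearMap.smul_apply, smul_eq_mul,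
          hB f t]
        ring
      rw [this]
      exact ht.add_even ((h.mul_left _).add (even_two_mul _))
  refine ⟨f - m • e, ?_, ?_⟩
  · simp only [map_sub, map_smul, LinearMap.sub_apply, LinearMap.smul_apply, smul_eq_mul, he, hef,
      hB f e]
    rw [hm]
    ring
  · rw [map_sub, map_smul, he, hef]
    simp

theorem IsUnimodular.exists_negative_or_isotropic (hB : IsUnimodular B) (hpos : ∃ x, 0 < B x x)
    (hrc : ∀ x y, 0 < B x x → B x x * B y y ≤ B x y ^ 2) (hrank : 2 ≤ Module.finrank ℤ L) :
    ∃ x, x ≠ 0 ∧ B x x = 0 := by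
  obtain ⟨v, hv⟩ := hpos
  obtain ⟨y, hy⟩ : ∃ y, B v v • y - B v y • v ≠ 0 := by
    by_contra! h
    obtain ⟨n, hn⟩ : ∃ n, Module.finrank ℤ L = n + 2 := ⟨_, (Nat.sub_add_cancel hrank).symm⟩
    set b := Module.finBasisOfFinrankEq ℤ L hn
    have h0 := fun i j => congrArg (fun z => b.repr z j) (h (b i))
    simp only [map_sub, map_smul, Finsupp.sub_apply, Finsupp.smul_apply, b.repr_self,
      map_zero, Finsupp.zero_apply, smul_eq_mul, Finsupp.single_apply] at h0
    have h1 := h0 0 0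
    have h2 := h0 0 1
    have h3 := h0 1 1
    simp only [if_true] at h1 h3
    rw [if_neg (by simp)] at h2
    have h4 : B v (b 0) ≠ 0 := by
      intro h
      rw [h] at h1
      omega
    have h5 : b.repr v 1 = 0 := by
      simpa [h4] using h2
    rw [h5] at h3
    omega
  have hz : B (B v v • y - B v y • v) (B v v • y - B v y • v) =
      B v v * (B v v * B y y - B v y ^ 2) := by
    simp only [map_sub, map_smul, LinearMap.sub_apply, LinearMap.smul_apply, smul_eq_mul,
      hB.symm y v]
    ring
  have hle := mul_nonpos_of_nonneg_of_nonpos hv.le (sub_nonpos.2 (hrc v y hv))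
  rw [← hz] at hle
  rcases hle.lt_or_eq with h | h
  · exact hB.exists_isotropic ⟨v, hv⟩ ⟨_, h⟩
  · exact ⟨_, hy, h⟩

end Lorentzian

theorem IsUnimodular.exists_lorentzian_basis (n : ℕ) : ∀ {L : Type} [AddCommGroup L]
    [Module.Free ℤ L] [Module.Finite ℤ L] {B : LinearMap.BilinForm ℤ L}, IsUnimodular B →
    (∃ x, ¬Even (B x x)) → (∃ x, 0 < B x x) →
    (∀ x y, 0 < B x x → B x x * B y y ≤ B x y ^ 2) → Module.finrank ℤ L = n + 1 →
    ∃ b : Module.Basis (Fin (n + 1)) ℤ L, ∀ i j,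
      B (b i) (b j) = if i = j then (if i = Fin.last n then 1 else -1) else 0 := by
  induction n with
  | zero =>
    intro L _ _ _ B hB hodd hpos hrc hrank
    set b := Module.finBasisOfFinrankEq ℤ L hrank
    have hx : ∀ x, x = b.repr x 0 • b 0 := fun x => by
      conv_lhs => rw [← b.sum_repr x]
      simp
    obtain ⟨u, hu⟩ := hB.surj (b.coord 0)
    have h1 := hu (b 0)
    rw [hx u, map_smul, LinearMap.smul_apply, Module.Basis.coord_apply, b.repr_self,
      Finsupp.single_eq_same, smul_eq_mul] at h1
    obtain ⟨v, hv⟩ := hpos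
    rw [hx v, map_smul, map_smul, LinearMap.smul_apply, smul_eq_mul, smul_eq_mul] at hv
    refine ⟨b, fun i j => ?_⟩
    obtain rfl : i = 0 := Fin.ext (by omega)
    obtain rfl : j = 0 := Fin.ext (by omega)
    simp only [if_true]
    rw [if_pos (by decide)]
    rcases Int.isUnit_iff.1 (IsUnit.of_mul_eq_one_right _ h1) with h | h
    · exact h
    · rw [h] at hv
      nlinarith [sq_nonneg (b.repr v 0)]
  | succ n ih =>
    intro L _ _ _ B hB hodd hpos hrc hrank
    obtain ⟨e, f, he, hef⟩ := hB.exists_dual_pair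
      (hB.exists_negative_or_isotropic hpos hrc (by omega))
    obtain ⟨f, hf, hef⟩ := exists_odd_dual hB.symm hodd he hef
    set w := f - e with hw
    have hww : B w w = -1 := by
      simp only [hw, map_sub, LinearMap.sub_apply, he, hf, hef, hB.symm f e]
      norm_num
    set K := LinearMap.ker (B w) with hK
    have hfK : f ∈ K := by
      rw [hK, LinearMap.mem_ker, hw, map_sub, LinearMap.sub_apply, hf, hef]
      norm_num
    have hproj : ∀ z, z + B w z • w ∈ K := fun z => by
      rw [hK, LinearMap.mem_ker, map_add, map_smul, hww]
      simp
    have hli : ∀ (c : ℤ), ∀ x ∈ K, c • w + x = 0 → c = 0 := by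
      intro c x hx h
      have := congrArg (B w) h
      rw [map_add, map_smul, LinearMap.mem_ker.1 hx, hww, map_zero, smul_eq_mul] at this
      omega
    have hKB : IsUnimodular (B.restrict K) := by
      refine ⟨fun x y => hB.symm _ _, fun g => ?_⟩
      let π : L →ₗ[ℤ] K := (LinearMap.id + (B w).smulRight w).codRestrict K hproj
      have hπ : ∀ y : K, π y = y := by
        intro y
        ext
        change (y : L) + B w y • w = y
        rw [LinearMap.mem_ker.1 y.2, zero_smul, add_zero]
      obtain ⟨u, hu⟩ := hB.surj (g.comp π)
      have huK : u ∈ K := by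
        rw [hK, LinearMap.mem_ker, hB.symm, hu, LinearMap.comp_apply]
        have : π w = 0 := by
          ext
          change w + B w w • w = 0
          rw [hww, neg_one_smul, add_neg_cancel]
        rw [this, map_zero]
      refine ⟨⟨u, huK⟩, fun y => ?_⟩
      change B u y = g y
      rw [hu, LinearMap.comp_apply, hπ]
    have hKrank : Module.finrank ℤ K = n + 1 := by
      have := Module.finrank_eq_card_basis
        (Module.Basis.mkFinCons w (Module.finBasis ℤ K) hli fun z => ⟨_, hproj z⟩)
      rw [hrank, Fintype.card_fin] at this
      omega
    obtain ⟨b, hb⟩ := ih hKB ⟨⟨f, hfK⟩, by change ¬Even (B f f); rw [hf]; decide⟩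
      ⟨⟨f, hfK⟩, by change 0 < B f f; rw [hf]; decide⟩ (fun x y => hrc x y) hKrank
    have hb' : ∀ i j, B (b i) (b j) =
      if i = j then (if i = Fin.last n then 1 else -1) else 0 := hb
    have hbw : ∀ i, B w (b i) = 0 := fun i => (b i).2
    refine ⟨Module.Basis.mkFinCons w b hli fun z => ⟨_, hproj z⟩, fun i j => ?_⟩
    rw [Module.Basis.coe_mkFinCons]
    refine Fin.cases ?_ (fun i => ?_) i <;> refine Fin.cases ?_ (fun j => ?_) j
    · simp [hww]
    · simp [hbw, (Fin.succ_ne_zero j).symm]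
    · simp [hB.symm _ w, hbw, Fin.succ_ne_zero i]
    · simp [hb', ← Fin.succ_last]

/-- The form takes a positive value and satisfies the reversed Cauchy-Schwarz inequality. -/
structure IsLorentzian {n : Type} [Fintype n] (M : Matrix n n ℤ) : Prop where
  pos : ∃ x, 0 < x ⬝ᵥ M *ᵥ x
  rcs : ∀ x y, 0 < x ⬝ᵥ M *ᵥ x → (x ⬝ᵥ M *ᵥ x) * (y ⬝ᵥ M *ᵥ y) ≤ (x ⬝ᵥ M *ᵥ y) ^ 2

/-- The Gram matrix `diag(1, -1, …, -1)`. -/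
def lorentzGram (n : ℕ) : Matrix (Fin (n + 1)) (Fin (n + 1)) ℤ :=
  Matrix.diagonal fun i => if i = 0 then 1 else -1

theorem dotProduct_congr {m n R : Type} [Fintype m] [Fintype n] [CommRing R] (P : Matrix m n R)
    (M : Matrix m m R) (x y : n → R) :
    (P *ᵥ x) ⬝ᵥ M *ᵥ (P *ᵥ y) = x ⬝ᵥ (Pᵀ * M * P) *ᵥ y := by
  rw [← mulVec_mulVec, ← mulVec_mulVec, dotProduct_mulVec x Pᵀ, vecMul_transpose]

theorem reversed_cauchy_schwarz {n : ℕ} (u w : Fin (n + 1) → ℝ)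
    (hu : 0 < u 0 * u 0 - ∑ i : Fin n, u i.succ * u i.succ) :
    (u 0 * u 0 - ∑ i : Fin n, u i.succ * u i.succ) *
      (w 0 * w 0 - ∑ i : Fin n, w i.succ * w i.succ) ≤
      (u 0 * w 0 - ∑ i : Fin n, u i.succ * w i.succ) ^ 2 := by
  have h := Finset.sum_nonneg fun (i : Fin n) (_ : i ∈ Finset.univ) =>
    sq_nonneg (w 0 * u i.succ - u 0 * w i.succ)
  have hU := Finset.sum_nonneg fun (i : Fin n) (_ : i ∈ Finset.univ) =>
    mul_self_nonneg (u i.succ)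
  have e : ∑ i : Fin n, (w 0 * u i.succ - u 0 * w i.succ) ^ 2 =
      w 0 ^ 2 * ∑ i : Fin n, u i.succ * u i.succ - 2 * u 0 * w 0 * ∑ i : Fin n, u i.succ * w i.succ
        + u 0 ^ 2 * ∑ i : Fin n, w i.succ * w i.succ := by
    rw [Finset.mul_sum, Finset.mul_sum, Finset.mul_sum, ← Finset.sum_sub_distrib,
      ← Finset.sum_add_distrib]
    exact Finset.sum_congr rfl fun i _ => by ring
  rw [e] at h
  generalize ∑ i : Fin n, u i.succ * u i.succ = U at *
  generalize ∑ i : Fin n, u i.succ * w i.succ = S at *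
  generalize ∑ i : Fin n, w i.succ * w i.succ = W at *
  have hu0 : 0 < u 0 ^ 2 := by nlinarith
  have h1 := mul_nonneg hu.le h
  have h2 : 0 ≤ u 0 ^ 2 * ((u 0 * w 0 - S) ^ 2 - (u 0 * u 0 - U) * (w 0 * w 0 - W)) := by
    nlinarith [sq_nonneg (w 0 * (u 0 * u 0 - U) - u 0 * (u 0 * w 0 - S))]
  have := nonneg_of_mul_nonneg_right h2 hu0
  linarith

theorem dotProduct_signDiagonal {n : ℕ} (u w : Fin (n + 1) → ℝ) :
    u ⬝ᵥ Matrix.diagonal (fun i : Fin (n + 1) => if (i : ℕ) = 0 then (1 : ℝ) else -1) *ᵥ w =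
      u 0 * w 0 - ∑ i : Fin n, u i.succ * w i.succ := by
  simp only [dotProduct, mulVec_diagonal, Fin.sum_univ_succ]
  simp [sub_eq_add_neg]

theorem cast_dotProduct_mulVec {n R : Type} [Fintype n] [CommRing R] (M : Matrix n n ℤ)
    (x y : n → ℤ) : ((x ⬝ᵥ M *ᵥ y : ℤ) : R) =
      (fun i => (x i : R)) ⬝ᵥ (M.map (Int.cast : ℤ → R)) *ᵥ fun i => (y i : R) := by
  simp [dotProduct, mulVec]

theorem IsHyperbolicGram.isLorentzian {n : ℕ} {M : Matrix (Fin (n + 1)) (Fin (n + 1)) ℤ}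
    (hM : IsHyperbolicGram M) : IsLorentzian M := by
  obtain ⟨P, hP, hPM⟩ := hM
  set D := Matrix.diagonal (fun i : Fin (n + 1) => if (i : ℕ) = 0 then (1 : ℝ) else -1)
  set R := M.map (Int.cast : ℤ → ℝ) with hR
  have hPP : P * P⁻¹ = 1 := Matrix.mul_nonsing_inv _ hP
  have hval : ∀ x y : Fin (n + 1) → ℝ, x ⬝ᵥ R *ᵥ y = (P⁻¹ *ᵥ x) ⬝ᵥ D *ᵥ (P⁻¹ *ᵥ y) := by
    intro x y
    have e : ∀ z : Fin (n + 1) → ℝ, P *ᵥ (P⁻¹ *ᵥ z) = z := fun z => by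
      rw [mulVec_mulVec, hPP, one_mulVec]
    conv_lhs => rw [← e x, ← e y]
    rw [dotProduct_congr, hPM]
  constructor
  · have hopen : IsOpen {x : Fin (n + 1) → ℝ | 0 < x ⬝ᵥ R *ᵥ x} := by
      refine isOpen_lt continuous_const ?_
      simp only [dotProduct, mulVec]
      fun_prop
    have hne : {x : Fin (n + 1) → ℝ | 0 < x ⬝ᵥ R *ᵥ x}.Nonempty := by
      refine ⟨P *ᵥ Pi.single 0 1, ?_⟩
      rw [Set.mem_ofPred_eq, hval, mulVec_mulVec, Matrix.nonsing_inv_mul _ hP, one_mulVec,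
        dotProduct_signDiagonal]
      simp [Fin.succ_ne_zero]
    have hdense : DenseRange fun (q : Fin (n + 1) → ℚ) (i : Fin (n + 1)) => (q i : ℝ) :=
      DenseRange.piMap fun _ => Rat.denseRange_cast
    obtain ⟨q, hq⟩ := hdense.exists_mem_open hopen hne
    obtain ⟨d, hd⟩ := IsLocalization.exist_integer_multiples_of_finite (nonZeroDivisors ℤ) q
    have hd0 : ((d : ℤ) : ℝ) ≠ 0 := Int.cast_ne_zero.2 (nonZeroDivisors.ne_zero d.2)
    choose z hz using hd
    refine ⟨z, ?_⟩
    have hz' : (fun i => (z i : ℝ)) = ((d : ℤ) : ℝ) • fun i => (q i : ℝ) := by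
      ext i
      have := hz i
      simp only [algebraMap_int_eq, eq_intCast, zsmul_eq_mul] at this
      simpa using congrArg (Rat.cast : ℚ → ℝ) this
    have : (0 : ℝ) < ((z ⬝ᵥ M *ᵥ z : ℤ) : ℝ) := by
      rw [cast_dotProduct_mulVec, hz', mulVec_smul, dotProduct_smul, smul_dotProduct, smul_eq_mul,
        smul_eq_mul, ← mul_assoc]
      exact mul_pos (mul_self_pos.2 hd0) hq
    exact_mod_cast this
  · intro x y hx
    have hx' : (0 : ℝ) < ((x ⬝ᵥ M *ᵥ x : ℤ) : ℝ) := by exact_mod_cast hx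
    have : (((x ⬝ᵥ M *ᵥ x : ℤ) : ℝ)) * ((y ⬝ᵥ M *ᵥ y : ℤ) : ℝ) ≤ ((x ⬝ᵥ M *ᵥ y : ℤ) : ℝ) ^ 2 := by
      simp only [cast_dotProduct_mulVec, ← hR, hval, D, dotProduct_signDiagonal] at hx' ⊢
      exact reversed_cauchy_schwarz _ _ hx'
    exact_mod_cast this

theorem lorentzGram_mul_self (n : ℕ) : lorentzGram n * lorentzGram n = 1 := by
  rw [lorentzGram, diagonal_mul_diagonal, ← diagonal_one]
  congr 1
  ext i
  split_ifs <;> norm_num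

theorem isUnit_det_of_mul_eq_one {n : Type} [Fintype n] [DecidableEq n] {A B : Matrix n n ℤ}
    (h : A * B = 1) : IsUnit A.det :=
  IsUnit.of_mul_eq_one B.det (by rw [← det_mul, h, det_one])

theorem IsLorentzian.exists_congr_lorentzGram {n : ℕ} {N : Matrix (Fin (n + 1)) (Fin (n + 1)) ℤ}
    (hN : IsLorentzian N) (hs : Nᵀ = N) (hu : IsUnit N.det) (hodd : ∃ x, ¬Even (x ⬝ᵥ N *ᵥ x)) :
    ∃ Q : Matrix (Fin (n + 1)) (Fin (n + 1)) ℤ, IsUnit Q.det ∧ Qᵀ * N * Q = lorentzGram n := by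
  have hB : ∀ x y, Matrix.toBilin' N x y = x ⬝ᵥ N *ᵥ y := fun x y => Matrix.toBilin'_apply' N x y
  have hsymm : ∀ x y, x ⬝ᵥ N *ᵥ y = y ⬝ᵥ N *ᵥ x := by
    intro x y
    rw [dotProduct_comm, ← vecMul_transpose, hs, dotProduct_mulVec]
  have hU : IsUnimodular (Matrix.toBilin' N) := by
    refine ⟨fun x y => by rw [hB, hB, hsymm], fun f => ?_⟩
    refine ⟨N⁻¹ *ᵥ fun i => f (Pi.single i 1), fun y => ?_⟩
    rw [hB, hsymm, mulVec_mulVec, Matrix.mul_nonsing_inv _ hu, one_mulVec]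
    conv_rhs => rw [← (Pi.basisFun ℤ (Fin (n + 1))).sum_repr y]
    simp only [map_sum, map_smul, Pi.basisFun_repr, Pi.basisFun_apply, dotProduct, smul_eq_mul]
  obtain ⟨b, hb⟩ := hU.exists_lorentzian_basis n
    (by simpa only [hB] using hodd) (by simpa only [hB] using hN.pos)
    (by simpa only [hB] using hN.rcs) (by simp)
  set Q : Matrix (Fin (n + 1)) (Fin (n + 1)) ℤ := Matrix.of fun i j => b (Fin.rev j) i with hQ
  have hQJ : Qᵀ * N * Q = lorentzGram n := by
    ext i j
    have h1 : Q *ᵥ Pi.single i 1 = b (Fin.rev i) := by ext; simp [hQ]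
    have h2 : Q *ᵥ Pi.single j 1 = b (Fin.rev j) := by ext; simp [hQ]
    have h3 := dotProduct_congr Q N (Pi.single i 1) (Pi.single j 1)
    rw [h1, h2, ← hB, hb] at h3
    simp only [mulVec_single_one, single_one_dotProduct, col_apply] at h3
    rw [← h3, lorentzGram, diagonal_apply]
    simp only [Fin.rev_inj, ← Fin.rev_zero]
  refine ⟨Q, ?_, hQJ⟩
  have := isUnit_det_of_mul_eq_one (lorentzGram_mul_self n)
  rw [← hQJ, det_mul] at this
  exact isUnit_of_mul_isUnit_right this

theorem ElemOfLength.natAbs_det {r a : ℕ} {M : Matrix (Fin r) (Fin r) ℤ} (hdet : M.det ≠ 0)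
    (h : ElemOfLength 2 a M) : M.det.natAbs = 2 ^ a := by
  obtain ⟨e⟩ := h
  have hinj : Function.Injective M.mulVecLin := by
    rw [← LinearMap.ker_eq_bot, LinearMap.ker_eq_bot']
    intro x hx
    exact Matrix.eq_zero_of_mulVec_eq_zero hdet hx
  have h1 := Submodule.natAbs_det_equiv (LinearMap.range M.mulVecLin)
    (LinearEquiv.ofInjective M.mulVecLin hinj)
  rw [Nat.card_congr e.toEquiv, Nat.card_fun, Nat.card_zmod, Nat.card_fin] at h1
  rw [← h1]
  congr 1
  rw [← LinearMap.det_toLin']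
  rfl

theorem ElemOfLength.exists_mul_eq_two {r a : ℕ} {M : Matrix (Fin r) (Fin r) ℤ}
    (h : ElemOfLength 2 a M) : ∃ N, M * N = (2 : ℤ) • (1 : Matrix (Fin r) (Fin r) ℤ) := by
  obtain ⟨e⟩ := h
  have key : ∀ x : Fin r → ℤ, ∃ y, M *ᵥ y = (2 : ℤ) • x := by
    intro x
    have : (2 : ℤ) • x ∈ LinearMap.range M.mulVecLin := by
      rw [← Submodule.Quotient.mk_eq_zero, Submodule.Quotient.mk_smul, ← e.map_eq_zero_iff,
        map_smul]
      ext i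
      rw [Pi.smul_apply, Pi.zero_apply, zsmul_eq_mul]
      exact (congrArg (· * _) (by decide : ((2 : ℤ) : ZMod 2) = 0)).trans (zero_mul _)
    exact this
  choose y hy using fun j => key (Pi.single j 1)
  refine ⟨Matrix.of fun i j => y j i, ?_⟩
  ext i j
  have := congrFun (hy j) i
  rw [Matrix.smul_apply, Matrix.one_apply]
  simpa [mulVec, dotProduct, Matrix.mul_apply, Pi.single_apply] using this

section Two

variable {n : Type} [Fintype n] [DecidableEq n]

theorem det_ne_zero_of_mul_eq_two {A B : Matrix n n ℤ} (h : A * B = (2 : ℤ) • 1) :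
    A.det ≠ 0 := by
  intro h0
  have := congrArg Matrix.det h
  rw [det_mul, h0, zero_mul, det_smul, det_one, mul_one] at this
  exact pow_ne_zero _ two_ne_zero this.symm

theorem mul_left_cancel_of_det_ne_zero {A B C : Matrix n n ℤ} (hA : A.det ≠ 0)
    (h : A * B = A * C) : B = C := by
  have := congrArg (A.adjugate * ·) h
  simp only [← Matrix.mul_assoc, adjugate_mul, smul_mul, Matrix.one_mul] at this
  exact smul_right_injective _ hA this

theorem mul_eq_two_comm {A B : Matrix n n ℤ} (h : A * B = (2 : ℤ) • 1) :
    B * A = (2 : ℤ) • 1 := by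
  refine mul_left_cancel_of_det_ne_zero (det_ne_zero_of_mul_eq_two h) ?_
  rw [← Matrix.mul_assoc, h, smul_mul, Matrix.one_mul, Matrix.mul_smul, Matrix.mul_one]

theorem transpose_eq_of_mul_eq_two {A B : Matrix n n ℤ} (h : A * B = (2 : ℤ) • 1) (hA : Aᵀ = A) :
    Bᵀ = B := by
  refine mul_left_cancel_of_det_ne_zero (det_ne_zero_of_mul_eq_two h) ?_
  rw [h, ← hA, ← transpose_mul, mul_eq_two_comm h, transpose_smul, transpose_one]

omit [DecidableEq n] in
theorem dotProduct_mulVec_comm_of_transpose_eq {N : Matrix n n ℤ} (hN : Nᵀ = N) (x y : n → ℤ) :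
    x ⬝ᵥ N *ᵥ y = y ⬝ᵥ N *ᵥ x := by
  rw [dotProduct_comm, ← vecMul_transpose, hN, dotProduct_mulVec]

end Two

theorem even_dotProduct_mulVec_sub {r : ℕ} {N : Matrix (Fin r) (Fin r) ℤ} (hN : Nᵀ = N)
    (z : Fin r → ℤ) : Even (z ⬝ᵥ N *ᵥ z - ∑ i, N i i * z i) := by
  set U : Matrix (Fin r) (Fin r) ℤ := Matrix.of fun i j => if i < j then N i j else 0 with hU
  have hNU : N = U + Uᵀ + Matrix.diagonal fun i => N i i := by
    ext i j
    have := congrFun (congrFun hN i) j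
    rw [transpose_apply] at this
    simp only [hU, Matrix.add_apply, of_apply, transpose_apply, diagonal_apply]
    rcases lt_trichotomy i j with h | rfl | h
    · simp [h, h.ne, h.not_gt]
    · simp
    · simp [h, h.ne', h.not_gt, this]
  have h1 : z ⬝ᵥ Uᵀ *ᵥ z = z ⬝ᵥ U *ᵥ z := by
    rw [mulVec_transpose, dotProduct_comm, dotProduct_mulVec]
  have h2 : z ⬝ᵥ N *ᵥ z - ∑ i, N i i * z i = 2 * (z ⬝ᵥ U *ᵥ z) +
      ∑ i, N i i * (z i * (z i - 1)) := by
    conv_lhs => rw [hNU]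
    rw [add_mulVec, add_mulVec, dotProduct_add, dotProduct_add, h1, ← two_mul, add_sub_assoc]
    congr 1
    simp only [dotProduct, mulVec_diagonal]
    rw [← Finset.sum_sub_distrib]
    refine Finset.sum_congr rfl fun i _ => ?_
    simp [hU]
    ring
  rw [h2]
  refine (even_two_mul _).add (Finset.even_sum _ fun i _ => ?_)
  exact (Int.even_mul_pred_self _).mul_left _

theorem even_dotProduct_mulVec {r : ℕ} {N : Matrix (Fin r) (Fin r) ℤ} (hN : Nᵀ = N)
    (h : ∀ i, Even (N i i)) (z : Fin r → ℤ) : Even (z ⬝ᵥ N *ᵥ z) := by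
  have := (even_dotProduct_mulVec_sub hN z).add
    (Finset.even_sum (s := Finset.univ) (fun i => N i i * z i) fun i _ => (h i).mul_right (z i))
  rwa [sub_add_cancel] at this

theorem deltaZero_iff {r : ℕ} {M N : Matrix (Fin r) (Fin r) ℤ} (h : M * N = (2 : ℤ) • 1)
    (hM : Mᵀ = M) : DeltaZero M ↔ ∀ i, Even (N i i) := by
  have hN := transpose_eq_of_mul_eq_two h hM
  have hinv : (M.map (Int.cast : ℤ → ℚ))⁻¹ = (2⁻¹ : ℚ) • N.map (Int.cast : ℤ → ℚ) := by
    refine Matrix.inv_eq_right_inv ?_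
    have : M.map (Int.cast : ℤ → ℚ) * N.map (Int.cast : ℤ → ℚ) = (2 : ℚ) • 1 := by
      ext i j
      have := congrArg (Int.cast : ℤ → ℚ) (congrFun (congrFun h i) j)
      simp only [Matrix.mul_apply, Matrix.map_apply, Matrix.smul_apply, Matrix.one_apply,
        smul_eq_mul] at this ⊢
      push_cast at this
      exact this
    rw [Matrix.mul_smul, this, smul_smul]
    norm_num
  have hval : ∀ z : Fin r → ℤ,
      (fun i => (z i : ℚ)) ⬝ᵥ ((M.map (Int.cast : ℤ → ℚ))⁻¹ *ᵥ fun i => (z i : ℚ)) =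
        2⁻¹ * ((z ⬝ᵥ N *ᵥ z : ℤ) : ℚ) := fun z => by
    rw [hinv, cast_dotProduct_mulVec, smul_mulVec, dotProduct_smul, smul_eq_mul]
  constructor
  · intro hd i
    obtain ⟨n, hn⟩ := hd (Pi.single i 1)
    rw [hval] at hn
    simp only [mulVec_single_one, single_one_dotProduct, col_apply] at hn
    refine ⟨n, ?_⟩
    have : (N i i : ℚ) = n + n := by linarith
    exact_mod_cast this
  · intro he z
    obtain ⟨n, hn⟩ := even_dotProduct_mulVec hN he z
    refine ⟨n, ?_⟩
    rw [hval, hn]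
    push_cast
    ring

section EvenSublattice

variable {r : ℕ} {M N : Matrix (Fin r) (Fin r) ℤ}

theorem exists_maximal_even_submodule (hM : Mᵀ = M) (he : ∀ i, Even (M i i)) (x₀ : Fin r → ℤ) :
    ∃ T : Submodule ℤ (Fin r → ℤ), x₀ ∈ T ∧ ∀ y, y ∈ T ↔ ∀ x ∈ T, Even (x ⬝ᵥ M *ᵥ y) := by
  let S : Set (Submodule ℤ (Fin r → ℤ)) :=
    {T | x₀ ∈ T ∧ ∀ x ∈ T, ∀ y ∈ T, Even (x ⬝ᵥ M *ᵥ y)}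
  have hne : S.Nonempty := by
    refine ⟨Submodule.span ℤ {x₀}, Submodule.mem_span_singleton_self _, fun x hx y hy => ?_⟩
    obtain ⟨c, rfl⟩ := Submodule.mem_span_singleton.1 hx
    obtain ⟨d, rfl⟩ := Submodule.mem_span_singleton.1 hy
    rw [mulVec_smul, dotProduct_smul, smul_dotProduct]
    exact ((even_dotProduct_mulVec hM he x₀).mul_left _).mul_left _
  obtain ⟨T, hT, hmax⟩ := set_has_maximal_iff_noetherian.2 inferInstance S hne
  refine ⟨T, hT.1, fun y => ⟨fun hy x hx => hT.2 x hx y hy, fun hy => ?_⟩⟩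
  by_contra hyT
  refine hmax (T ⊔ Submodule.span ℤ {y}) ⟨Submodule.mem_sup_left hT.1, fun u hu v hv => ?_⟩ ?_
  · obtain ⟨u, hu₁, u', hu', rfl⟩ := Submodule.mem_sup.1 hu
    obtain ⟨v, hv₁, v', hv', rfl⟩ := Submodule.mem_sup.1 hv
    obtain ⟨c, rfl⟩ := Submodule.mem_span_singleton.1 hu'
    obtain ⟨d, rfl⟩ := Submodule.mem_span_singleton.1 hv'
    simp only [mulVec_add, mulVec_smul, dotProduct_add, dotProduct_smul, add_dotProduct,
      smul_dotProduct, smul_eq_mul]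
    rw [dotProduct_mulVec_comm_of_transpose_eq hM y v]
    exact (((hT.2 u hu₁ v hv₁).add ((hy v hv₁).mul_left _))).add
      (((hy u hu₁).add ((even_dotProduct_mulVec hM he y).mul_left _)).mul_left _)
  · exact lt_of_le_of_ne le_sup_left fun h => hyT (h ▸ Submodule.mem_sup_right
      (Submodule.mem_span_singleton_self y))

theorem exists_matrix_range_eq {T : Submodule ℤ (Fin r → ℤ)} (hT : ∀ x, (2 : ℤ) • x ∈ T) :
    ∃ A : Matrix (Fin r) (Fin r) ℤ, ∀ y, y ∈ T ↔ ∃ c, A *ᵥ c = y := by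
  have hrank : Module.finrank ℤ T = r := by
    apply le_antisymm
    · simpa using Submodule.finrank_le T
    · have hinj : Function.Injective
          (((2 : ℤ) • (LinearMap.id : (Fin r → ℤ) →ₗ[ℤ] _)).codRestrict T hT) := by
        intro x y h
        have h' : (2 : ℤ) • x = (2 : ℤ) • y := congrArg Subtype.val h
        exact smul_right_injective _ two_ne_zero h'
      simpa using LinearMap.finrank_le_finrank_of_injective hinj
  set b := Module.finBasisOfFinrankEq ℤ T hrank
  refine ⟨Matrix.of fun i j => (b j : Fin r → ℤ) i, fun y => ?_⟩
  have hmul : ∀ c : Fin r → ℤ, (Matrix.of fun i j => (b j : Fin r → ℤ) i) *ᵥ c =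
      ((∑ j, c j • b j : T) : Fin r → ℤ) := by
    intro c
    ext i
    simp [mulVec, dotProduct, mul_comm]
  constructor
  · intro hy
    exact ⟨b.repr ⟨y, hy⟩, by rw [hmul, b.sum_repr]⟩
  · rintro ⟨c, rfl⟩
    rw [hmul]
    exact Subtype.property _

theorem exists_matrix_mul_eq {m : Type} {A : Matrix (Fin r) (Fin r) ℤ} {B : Matrix (Fin r) m ℤ}
    (h : ∀ j, ∃ c, A *ᵥ c = fun i => B i j) : ∃ X : Matrix (Fin r) m ℤ, A * X = B := by
  choose c hc using h
  refine ⟨Matrix.of fun i j => c j i, ?_⟩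
  ext i j
  exact congrFun (hc j) i

end EvenSublattice

theorem isLorentzian_of_congr {m n : Type} [Fintype m] [Fintype n] {M : Matrix m m ℤ}
    {N : Matrix n n ℤ} (hM : IsLorentzian M) (A : Matrix m n ℤ) {k l : ℤ} (hk : 0 < k) (hl : 0 < l)
    (hA : ∀ x, ∃ c, A *ᵥ c = l • x) (h : Aᵀ * M * A = k • N) : IsLorentzian N := by
  have hval : ∀ x y, (A *ᵥ x) ⬝ᵥ M *ᵥ (A *ᵥ y) = k * (x ⬝ᵥ N *ᵥ y) := fun x y => by
    rw [dotProduct_congr, h, smul_mulVec, dotProduct_smul, smul_eq_mul]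
  constructor
  · obtain ⟨x, hx⟩ := hM.pos
    obtain ⟨c, hc⟩ := hA x
    refine ⟨c, ?_⟩
    have h1 := hval c c
    rw [hc, mulVec_smul, dotProduct_smul, smul_dotProduct, smul_eq_mul, smul_eq_mul] at h1
    have h2 : 0 < k * (c ⬝ᵥ N *ᵥ c) := h1 ▸ mul_pos hl (mul_pos hl hx)
    exact pos_of_mul_pos_right h2 hk.le
  · intro x y hx
    have h1 := hM.rcs (A *ᵥ x) (A *ᵥ y) (by rw [hval]; exact mul_pos hk hx)
    rw [hval, hval, hval] at h1
    have h2 : k ^ 2 * ((x ⬝ᵥ N *ᵥ x) * (y ⬝ᵥ N *ᵥ y)) ≤ k ^ 2 * (x ⬝ᵥ N *ᵥ y) ^ 2 := by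
      linarith
    exact le_of_mul_le_mul_left h2 (pow_pos hk 2)

/-- `E` embeds the lattice with Gram matrix `M`, scaled by two, into the standard Lorentzian lattice
so that the image contains twice the ambient lattice. -/
structure IsCodeEmbedding {n : ℕ} (M E : Matrix (Fin (n + 1)) (Fin (n + 1)) ℤ) : Prop where
  congr : Eᵀ * lorentzGram n * E = (2 : ℤ) • M
  exists_mul : ∃ A, E * A = (2 : ℤ) • (1 : Matrix (Fin (n + 1)) (Fin (n + 1)) ℤ)

section Embedding

variable {n : ℕ} {M N : Matrix (Fin (n + 1)) (Fin (n + 1)) ℤ}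

theorem exists_isCodeEmbedding (hM : Mᵀ = M) (he : ∀ i, Even (M i i)) (hL : IsLorentzian M)
    (hMN : M * N = (2 : ℤ) • 1) {x₀ : Fin (n + 1) → ℤ} (hx₀ : ¬(4 : ℤ) ∣ x₀ ⬝ᵥ M *ᵥ x₀) :
    ∃ E, IsCodeEmbedding M E := by
  have hN := transpose_eq_of_mul_eq_two hMN hM
  have hNM := mul_eq_two_comm hMN
  obtain ⟨T, hxT, hT⟩ := exists_maximal_even_submodule hM he x₀
  have h2 : ∀ x, (2 : ℤ) • x ∈ T := fun x => (hT _).2 fun y _ => by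
    rw [mulVec_smul, dotProduct_smul]
    exact even_two_mul _
  obtain ⟨A, hA⟩ := exists_matrix_range_eq h2
  have hcol : ∀ c, A *ᵥ c ∈ T := fun c => (hA _).2 ⟨c, rfl⟩
  have hentry : ∀ i j, Even ((Aᵀ * M * A) i j) := by
    intro i j
    have := (hT _).1 (hcol (Pi.single j 1)) _ (hcol (Pi.single i 1))
    rw [dotProduct_congr] at this
    simpa only [mulVec_single_one, single_one_dotProduct, col_apply] using this
  choose K hK using fun i j => even_iff_two_dvd.1 (hentry i j)
  have hK' : Aᵀ * M * A = (2 : ℤ) • Matrix.of K := by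
    ext i j
    rw [hK]
    rfl
  obtain ⟨S, hS⟩ : ∃ S, A * S = N := exists_matrix_mul_eq fun j =>
    (hA _).1 <| (hT _).2 fun y _ => by
    have : (fun i => N i j) = N *ᵥ Pi.single j 1 := by
      rw [mulVec_single_one]
      rfl
    rw [this, mulVec_mulVec, hMN, smul_mulVec, dotProduct_smul]
    exact even_two_mul _
  obtain ⟨A₂, hA₂⟩ : ∃ A₂, A * A₂ = (2 : ℤ) • 1 := exists_matrix_mul_eq fun j => (hA _).1 <| by
    have : (fun i => ((2 : ℤ) • (1 : Matrix (Fin (n + 1)) (Fin (n + 1)) ℤ)) i j) =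
        (2 : ℤ) • fun i => (1 : Matrix (Fin (n + 1)) (Fin (n + 1)) ℤ) i j := rfl
    rw [this]
    exact h2 _
  have hSM : Aᵀ * M * Sᵀ = (2 : ℤ) • 1 := mul_eq_two_comm (by
    rw [← Matrix.mul_assoc, ← transpose_mul, hS, hN, hNM])
  obtain ⟨X, hX⟩ : ∃ X, A * X = Sᵀ := exists_matrix_mul_eq fun j =>
    (hA _).1 <| (hT _).2 fun y hy => by
    obtain ⟨c, rfl⟩ := (hA _).1 hy
    have : (fun i => Sᵀ i j) = Sᵀ *ᵥ Pi.single j 1 := by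
      rw [mulVec_single_one]
      rfl
    rw [this, mulVec_mulVec, ← vecMul_transpose, ← dotProduct_mulVec, mulVec_mulVec,
      ← Matrix.mul_assoc, hSM, smul_mulVec, dotProduct_smul]
    exact even_two_mul _
  have hKX : Matrix.of K * X = 1 := by
    have : (2 : ℤ) • (Matrix.of K * X) = (2 : ℤ) • 1 := by
      rw [← Matrix.smul_mul, ← hK', Matrix.mul_assoc, hX, hSM]
    exact smul_right_injective _ two_ne_zero this
  have hKt : (Matrix.of K)ᵀ = Matrix.of K := by
    refine smul_right_injective _ (two_ne_zero (α := ℤ)) ?_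
    change (2 : ℤ) • (Matrix.of K)ᵀ = (2 : ℤ) • Matrix.of K
    rw [← transpose_smul, ← hK', transpose_mul, transpose_mul, transpose_transpose, hM,
      Matrix.mul_assoc]
  obtain ⟨Q, hQ, hQK⟩ := (isLorentzian_of_congr hL A two_pos two_pos
    (fun x => (hA _).1 (h2 x)) hK').exists_congr_lorentzGram hKt (isUnit_det_of_mul_eq_one hKX) (by
      obtain ⟨c, rfl⟩ := (hA _).1 hxT
      refine ⟨c, fun h => hx₀ ?_⟩
      obtain ⟨d, hd⟩ := h
      rw [dotProduct_congr, hK', smul_mulVec, dotProduct_smul, hd, smul_eq_mul]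
      exact ⟨d, by ring⟩)
  have hE : (Q⁻¹ * A₂) * (A * Q) = (2 : ℤ) • 1 := by
    rw [Matrix.mul_assoc, ← Matrix.mul_assoc A₂, mul_eq_two_comm hA₂, Matrix.smul_mul,
      Matrix.one_mul, Matrix.mul_smul, Matrix.nonsing_inv_mul _ hQ]
  refine ⟨Q⁻¹ * A₂, ?_, A * Q, hE⟩
  refine smul_right_injective _ (two_ne_zero (α := ℤ)) ?_
  change (2 : ℤ) • ((Q⁻¹ * A₂)ᵀ * lorentzGram n * (Q⁻¹ * A₂)) = (2 : ℤ) • (2 : ℤ) • M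
  have h1 : (A * Q)ᵀ * M * (A * Q) = (2 : ℤ) • lorentzGram n := by
    rw [← hQK, ← Matrix.smul_mul, ← Matrix.mul_smul, ← hK', transpose_mul]
    simp only [Matrix.mul_assoc]
  have h3 := mul_eq_two_comm hE
  rw [← Matrix.smul_mul, ← Matrix.mul_smul, ← h1]
  calc (Q⁻¹ * A₂)ᵀ * ((A * Q)ᵀ * M * (A * Q)) * (Q⁻¹ * A₂)
      = ((A * Q) * (Q⁻¹ * A₂))ᵀ * M * ((A * Q) * (Q⁻¹ * A₂)) := by
        rw [transpose_mul (A * Q)]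
        simp only [Matrix.mul_assoc]
    _ = (2 : ℤ) • (2 : ℤ) • M := by
        rw [h3, transpose_smul, transpose_one]
        simp only [Matrix.smul_mul, Matrix.mul_smul, Matrix.one_mul, Matrix.mul_one]

theorem IsCodeEmbedding.exists_mulVec_eq_one_iff {E : Matrix (Fin (n + 1)) (Fin (n + 1)) ℤ}
    (hE : IsCodeEmbedding M E) (hMN : M * N = (2 : ℤ) • 1) :
    (∃ c, E *ᵥ c = 1) ↔ ∀ i, Even (N i i) := by
  obtain ⟨h, A, hA⟩ := hE
  have hA' := mul_eq_two_comm hA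
  have hN : N = A * lorentzGram n * Aᵀ := by
    refine mul_left_cancel_of_det_ne_zero (det_ne_zero_of_mul_eq_two hMN) ?_
    refine smul_right_injective _ (two_ne_zero (α := ℤ)) ?_
    change (2 : ℤ) • (M * N) = (2 : ℤ) • (M * (A * lorentzGram n * Aᵀ))
    rw [hMN, ← Matrix.smul_mul, ← h]
    calc (2 : ℤ) • (2 : ℤ) • (1 : Matrix (Fin (n + 1)) (Fin (n + 1)) ℤ)
        = (2 : ℤ) • (A * E)ᵀ := by rw [hA', transpose_smul, transpose_one]
      _ = (2 : ℤ) • (Eᵀ * (lorentzGram n * lorentzGram n) * Aᵀ) := by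
        rw [lorentzGram_mul_self, Matrix.mul_one, transpose_mul]
      _ = Eᵀ * lorentzGram n * (E * A) * (lorentzGram n * Aᵀ) := by
        rw [hA]
        simp only [Matrix.mul_assoc, Matrix.smul_mul, Matrix.mul_smul, Matrix.one_mul]
      _ = _ := by simp only [Matrix.mul_assoc]
  have hpar : ∀ i, Even (N i i) ↔ Even ((A *ᵥ 1) i) := by
    intro i
    rw [← Int.even_sub, hN, Matrix.mul_apply]
    simp only [lorentzGram, mul_diagonal, transpose_apply, mulVec, dotProduct, Pi.one_apply,
      mul_one]
    rw [← Finset.sum_sub_distrib]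
    refine Finset.even_sum _ fun j _ => ?_
    have := Int.even_mul_pred_self (A i j)
    split_ifs
    · rwa [show A i j * 1 * A i j - A i j = A i j * (A i j - 1) by ring]
    · rw [show A i j * -1 * A i j - A i j = -(A i j * (A i j - 1) + 2 * A i j) by ring]
      exact (this.add (even_two_mul (A i j))).neg
  simp only [hpar]
  constructor
  · rintro ⟨c, hc⟩ i
    rw [← hc, mulVec_mulVec, hA', smul_mulVec, one_mulVec]
    exact even_two_mul _
  · intro h
    choose c hc using fun i => even_iff_two_dvd.1 (h i)
    refine ⟨c, ?_⟩
    have h1 : A *ᵥ 1 = (2 : ℤ) • c := funext hc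
    refine smul_right_injective _ (two_ne_zero (α := ℤ)) ?_
    change (2 : ℤ) • (E *ᵥ c) = (2 : ℤ) • 1
    rw [← mulVec_smul, ← h1, mulVec_mulVec, hA, smul_mulVec, one_mulVec]

end Embedding

/-- The bilinear form `x₀y₀ - x₁y₁ - … - xₙyₙ` on `ℤ^(n+1)`. -/
def lorentzForm (n : ℕ) : LinearMap.BilinForm ℤ (Fin (n + 1) → ℤ) :=
  Matrix.toBilin' (lorentzGram n)

section LorentzForm

variable {n : ℕ}

theorem dotProduct_lorentzGram (x y : Fin (n + 1) → ℤ) :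
    x ⬝ᵥ lorentzGram n *ᵥ y = lorentzForm n x y :=
  (Matrix.toBilin'_apply' _ _ _).symm

theorem lorentzForm_apply (x y : Fin (n + 1) → ℤ) :
    lorentzForm n x y = x 0 * y 0 - ∑ i : Fin n, x i.succ * y i.succ := by
  rw [← dotProduct_lorentzGram, lorentzGram]
  simp only [dotProduct, mulVec_diagonal, Fin.sum_univ_succ]
  simp [Fin.succ_ne_zero, sub_eq_add_neg]

theorem lorentzForm_comm (x y : Fin (n + 1) → ℤ) : lorentzForm n x y = lorentzForm n y x := by
  rw [lorentzForm_apply, lorentzForm_apply]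
  simp only [mul_comm]

theorem even_lorentzForm_sub_dotProduct (x y : Fin (n + 1) → ℤ) :
    Even (lorentzForm n x y - x ⬝ᵥ y) := by
  refine ⟨-∑ i : Fin n, x i.succ * y i.succ, ?_⟩
  rw [lorentzForm_apply, dotProduct, Fin.sum_univ_succ]
  ring

theorem even_lorentzForm_self_sub_sum (x : Fin (n + 1) → ℤ) :
    Even (lorentzForm n x x - ∑ i, x i) := by
  have h : Even (x ⬝ᵥ x - ∑ i, x i) := by
    rw [dotProduct, ← Finset.sum_sub_distrib]
    refine Finset.even_sum _ fun i _ => ?_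
    rw [show x i * x i - x i = x i * (x i - 1) by ring]
    exact Int.even_mul_pred_self _
  have := (even_lorentzForm_sub_dotProduct x x).add h
  rwa [sub_add_sub_cancel] at this

theorem sum_update_sq {ι : Type} [Fintype ι] [DecidableEq ι] (o : ι → ℤ) (j : ι) (v : ℤ) :
    ∑ i, Function.update o j v i * Function.update o j v i =
      ∑ i, o i * o i - o j * o j + v * v := by
  rw [← Finset.add_sum_erase _ _ (Finset.mem_univ j),
    ← Finset.add_sum_erase _ (fun i => o i * o i) (Finset.mem_univ j), Function.update_self,
    Finset.sum_congr rfl fun i hi => by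
      rw [Function.update_of_ne (Finset.ne_of_mem_erase hi)]]
  ring

theorem exists_root_congr {p : Fin (n + 1) → ℤ} (hp : (4 : ℤ) ∣ lorentzForm n p p - 2)
    (hodd : ∃ i, Even (p i)) :
    ∃ u, lorentzForm n (p + (2 : ℤ) • u) (p + (2 : ℤ) • u) = -2 := by
  suffices h : ∃ w, lorentzForm n w w = -2 ∧ ∀ i, (2 : ℤ) ∣ w i - p i by
    obtain ⟨w, hw, hwp⟩ := h
    choose u hu using hwp
    refine ⟨u, ?_⟩
    rwa [show p + (2 : ℤ) • u = w from ?_]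
    ext i
    have := hu i
    simp only [Pi.add_apply, Pi.smul_apply, smul_eq_mul]
    linarith
  set o : Fin n → ℤ := fun i => p i.succ % 2 with ho
  have ho01 : ∀ i, o i = 0 ∨ o i = 1 := fun i => Int.emod_two_eq_zero_or_one _
  have hoo : ∀ i, o i * o i = o i := fun i => by rcases ho01 i with h | h <;> rw [h] <;> rfl
  have hop : ∀ i, (2 : ℤ) ∣ o i - p i.succ := fun i => by simp only [ho]; omega
  have hsum : (4 : ℤ) ∣ ∑ i : Fin n, p i.succ * p i.succ - ∑ i, o i := by
    rw [← Finset.sum_sub_distrib]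
    refine Finset.dvd_sum fun i _ => ?_
    obtain ⟨c, hc⟩ := hop i
    have : p i.succ = o i - 2 * c := by linarith
    rw [this]
    refine ⟨c * c - o i * c, ?_⟩
    linear_combination hoo i
  have hval : ∀ (a v : ℤ) (j : Fin n), lorentzForm n (Fin.cons a (Function.update o j v) :
      Fin (n + 1) → ℤ) (Fin.cons a (Function.update o j v) : Fin (n + 1) → ℤ) =
      a * a - (∑ i, o i - o j + v * v) := by
    intro a v j
    rw [lorentzForm_apply]
    simp only [Fin.cons_zero, Fin.cons_succ]
    rw [sum_update_sq]
    simp only [hoo]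
  have hcong : ∀ (a v : ℤ) (j : Fin n), (2 : ℤ) ∣ a - p 0 → (2 : ℤ) ∣ v - o j → ∀ i,
      (2 : ℤ) ∣ (Fin.cons a (Function.update o j v) : Fin (n + 1) → ℤ) i - p i := by
    intro a v j ha hv i
    refine Fin.cases ?_ (fun i => ?_) i
    · exact ha
    · rw [Fin.cons_succ]
      by_cases h : i = j
      · subst h
        rw [Function.update_self]
        have := hop i
        omega
      · rw [Function.update_of_ne h]
        exact hop i
  rw [lorentzForm_apply] at hp
  rcases Int.even_or_odd' (p 0) with ⟨c, hc | hc⟩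
  · have hk : (4 : ℤ) ∣ ∑ i, o i - 2 := by
      have : p 0 * p 0 = 4 * (c * c) := by rw [hc]; ring
      omega
    obtain ⟨q, hq⟩ := hk
    obtain ⟨j, hj⟩ : ∃ j, o j = 1 := by
      by_contra! h
      have : ∑ i, o i = 0 := Finset.sum_eq_zero fun i _ => (ho01 i).resolve_right (h i)
      omega
    refine ⟨_, ?_, hcong (2 * q) (2 * q - 1) j (by omega) (by omega)⟩
    rw [hval, hj]
    linear_combination -hq
  · have hk : (4 : ℤ) ∣ ∑ i, o i - 3 := by
      have : p 0 * p 0 = 4 * (c * c + c) + 1 := by rw [hc]; ring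
      omega
    obtain ⟨q, hq⟩ := hk
    obtain ⟨j, hj⟩ : ∃ j, o j = 0 := by
      obtain ⟨i, hi⟩ := hodd
      obtain ⟨j, rfl⟩ := Fin.exists_succ_eq.2 (show i ≠ 0 by
        rintro rfl
        rw [hc] at hi
        exact Int.not_even_iff_odd.2 ⟨c, rfl⟩ hi)
      exact ⟨j, Int.even_iff.1 hi⟩
    refine ⟨_, ?_, hcong (2 * q + 1) (2 * q) j (by omega) (by omega)⟩
    rw [hval, hj]
    linear_combination -hq

theorem exists_reflection {p d₀ : Fin (n + 1) → ℤ} (hp : (4 : ℤ) ∣ lorentzForm n p p - 2)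
    (hd₀ : Even (lorentzForm n d₀ d₀)) (hpd : Odd (lorentzForm n p d₀)) :
    ∃ S : Matrix (Fin (n + 1)) (Fin (n + 1)) ℤ, S * S = 1 ∧ Sᵀ * lorentzGram n * S = lorentzGram n ∧
      ∀ d, (Even (lorentzForm n p d) → ∃ u, S *ᵥ d = d + (2 : ℤ) • u) ∧
        (Odd (lorentzForm n p d) → ∃ u, S *ᵥ d = d + p + (2 : ℤ) • u) := by
  obtain ⟨u, hu⟩ := exists_root_congr hp (by
    by_contra! h
    have h1 := even_lorentzForm_sub_dotProduct p d₀
    have h2 := even_lorentzForm_self_sub_sum d₀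
    have h3 : Even (p ⬝ᵥ d₀ - ∑ i, d₀ i) := by
      rw [dotProduct, ← Finset.sum_sub_distrib]
      refine Finset.even_sum _ fun i _ => ?_
      rw [← sub_one_mul]
      exact ((Int.not_even_iff_odd.1 (h i)).sub_odd odd_one).mul_right _
    have h4 := ((h1.add h3).sub h2).add hd₀
    rw [show lorentzForm n p d₀ - p ⬝ᵥ d₀ + (p ⬝ᵥ d₀ - ∑ i, d₀ i) -
      (lorentzForm n d₀ d₀ - ∑ i, d₀ i) + lorentzForm n d₀ d₀ = lorentzForm n p d₀ by ring] at h4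
    exact Int.not_even_iff_odd.2 hpd h4)
  obtain ⟨w, hw⟩ : ∃ w, w = p + (2 : ℤ) • u := ⟨_, rfl⟩
  rw [← hw] at hu
  set s : (Fin (n + 1) → ℤ) →ₗ[ℤ] (Fin (n + 1) → ℤ) :=
    LinearMap.id + (lorentzForm n w).smulRight w with hs
  have hsx : ∀ x, LinearMap.toMatrix' s *ᵥ x = x + lorentzForm n w x • w := fun x => by
    rw [LinearMap.toMatrix'_mulVec]
    rfl
  have hwx : ∀ x, lorentzForm n w x = lorentzForm n p x + 2 * lorentzForm n u x := fun x => by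
    rw [hw, map_add, map_smul, LinearMap.add_apply, LinearMap.smul_apply, smul_eq_mul]
  refine ⟨LinearMap.toMatrix' s, ?_, ?_, fun d => ⟨fun h => ?_, fun h => ?_⟩⟩
  · refine Matrix.ext_of_mulVec_single fun i => ?_
    rw [← mulVec_mulVec, hsx, hsx, one_mulVec, map_add, map_smul, hu, smul_eq_mul]
    module
  · ext i j
    have h := dotProduct_congr (LinearMap.toMatrix' s) (lorentzGram n) (Pi.single i 1)
      (Pi.single j 1)
    rw [dotProduct_lorentzGram, hsx, hsx] at h
    simp only [map_add, map_smul, LinearMap.add_apply, LinearMap.smul_apply, smul_eq_mul, hu,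
      lorentzForm_comm _ w] at h
    have h2 := dotProduct_lorentzGram (n := n) (Pi.single i 1) (Pi.single j 1)
    simp only [mulVec_single_one, single_one_dotProduct, col_apply] at h h2
    rw [← h, h2]
    ring
  · obtain ⟨c, hc⟩ := h
    refine ⟨(c + lorentzForm n u d) • w, ?_⟩
    rw [hsx, hwx, hc]
    module
  · obtain ⟨c, hc⟩ := h
    refine ⟨(c + lorentzForm n u d) • w + u, ?_⟩
    rw [hsx, hwx, hc, hw]
    module

end LorentzForm

section CodeTransitivity

variable {n : ℕ}

theorem exists_isometry_of_odd {x y : Fin (n + 1) → ℤ} (hx : (4 : ℤ) ∣ lorentzForm n x x)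
    (hy : (4 : ℤ) ∣ lorentzForm n y y) (hxy : Odd (lorentzForm n x y)) :
    ∃ S : Matrix (Fin (n + 1)) (Fin (n + 1)) ℤ, S * S = 1 ∧ Sᵀ * lorentzGram n * S = lorentzGram n ∧
      (∃ u, S *ᵥ x = y + (2 : ℤ) • u) ∧
      ∀ d, Even (lorentzForm n x d) → Even (lorentzForm n y d) →
        ∃ u, S *ᵥ d = d + (2 : ℤ) • u := by
  obtain ⟨k, hk⟩ := hxy
  obtain ⟨a, ha⟩ := hx
  obtain ⟨b, hb⟩ := hy
  have hpx : Odd (lorentzForm n (x + y) x) := by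
    rw [map_add, LinearMap.add_apply, lorentzForm_comm y, ha, hk]
    exact ⟨2 * a + k, by ring⟩
  obtain ⟨S, hS, hSJ, h⟩ := exists_reflection (p := x + y) (d₀ := x) (by
      simp only [map_add, LinearMap.add_apply]
      rw [lorentzForm_comm y x, ha, hb, hk]
      exact ⟨a + b + k, by ring⟩) (by rw [ha]; exact ⟨2 * a, by ring⟩) hpx
  refine ⟨S, hS, hSJ, ?_, fun d h1 h2 => (h d).1 ?_⟩
  · obtain ⟨u, hu⟩ := (h x).2 hpx
    refine ⟨x + u, ?_⟩
    rw [hu]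
    module
  · rw [map_add, LinearMap.add_apply]
    exact h1.add h2

theorem exists_lorentzForm_odd {W : Submodule ℤ (Fin (n + 1) → ℤ)} (hW : ∀ u, (2 : ℤ) • u ∈ W)
    {x : Fin (n + 1) → ℤ} (hx : x ∉ W) :
    ∃ z, Odd (lorentzForm n z x) ∧ ∀ w ∈ W, Even (lorentzForm n z w) := by
  let f : (Fin (n + 1) → ℤ) →+ (Fin (n + 1) → ZMod 2) := (Int.castAddHom (ZMod 2)).compLeft _
  have hf : ∀ v i, f v i = (v i : ZMod 2) := fun v i => rfl
  let V : Submodule (ZMod 2) (Fin (n + 1) → ZMod 2) :=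
    AddSubgroup.toZModSubmodule 2 (W.toAddSubgroup.map f)
  have hV : ∀ v, v ∈ V ↔ ∃ w ∈ W, f w = v := fun v => Iff.rfl
  have hxV : f x ∉ V := fun h => by
    obtain ⟨w, hw, hwx⟩ := (hV _).1 h
    have : ∀ i, (2 : ℤ) ∣ x i - w i := fun i => by
      have := congrFun hwx i
      rw [hf, hf, ZMod.intCast_eq_intCast_iff_dvd_sub] at this
      exact_mod_cast this
    choose u hu using this
    refine hx ?_
    rw [show x = w + (2 : ℤ) • u from ?_]
    · exact W.add_mem hw (hW u)
    · ext i
      have := hu i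
      simp only [Pi.add_apply, Pi.smul_apply, smul_eq_mul]
      linarith
  obtain ⟨φ, hφx, hφ⟩ := Submodule.exists_le_ker_of_notMem hxV
  choose z hz using fun i : Fin (n + 1) => ZMod.intCast_surjective (φ (Pi.single i 1))
  have key : ∀ v, ((lorentzForm n z v : ℤ) : ZMod 2) = φ (f v) := fun v => by
    have h1 : ((lorentzForm n z v : ℤ) : ZMod 2) = ((z ⬝ᵥ v : ℤ) : ZMod 2) := by
      have := even_lorentzForm_sub_dotProduct z v
      rw [← sub_eq_zero, ← Int.cast_sub, ZMod.intCast_zmod_eq_zero_iff_dvd]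
      exact_mod_cast this.two_dvd
    rw [h1, LinearMap.pi_apply_eq_sum_univ φ, dotProduct, Int.cast_sum]
    refine Finset.sum_congr rfl fun i _ => ?_
    rw [Int.cast_mul, hz, hf, smul_eq_mul, mul_comm]
    congr 2
    ext j
    simp [Pi.single_apply, eq_comm]
  have heven : ∀ v, Even (lorentzForm n z v) ↔ φ (f v) = 0 := fun v => by
    rw [← key, ZMod.intCast_zmod_eq_zero_iff_dvd, even_iff_two_dvd]
    norm_cast
  refine ⟨z, ?_, fun w hw => (heven w).2 ?_⟩
  · rw [← Int.not_even_iff_odd, heven]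
    exact hφx
  · exact hφ ((hV _).2 ⟨w, hw, rfl⟩)

namespace IsCodeEmbedding

variable {M E : Matrix (Fin (n + 1)) (Fin (n + 1)) ℤ}

theorem two_smul_mem (hE : IsCodeEmbedding M E) (u : Fin (n + 1) → ℤ) :
    (2 : ℤ) • u ∈ LinearMap.range E.mulVecLin := by
  obtain ⟨A, hA⟩ := hE.exists_mul
  refine ⟨A *ᵥ u, ?_⟩
  rw [mulVecLin_apply, mulVec_mulVec, hA, smul_mulVec, one_mulVec]

theorem even_form (hE : IsCodeEmbedding M E) {x y : Fin (n + 1) → ℤ}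
    (hx : x ∈ LinearMap.range E.mulVecLin) (hy : y ∈ LinearMap.range E.mulVecLin) :
    Even (lorentzForm n x y) := by
  obtain ⟨c, rfl⟩ := hx
  obtain ⟨d, rfl⟩ := hy
  rw [← dotProduct_lorentzGram, mulVecLin_apply, mulVecLin_apply, dotProduct_congr, hE.congr,
    smul_mulVec, dotProduct_smul]
  exact even_two_mul _

theorem four_dvd_form_self (hE : IsCodeEmbedding M E) (hM : Mᵀ = M) (he : ∀ i, Even (M i i))
    {x : Fin (n + 1) → ℤ} (hx : x ∈ LinearMap.range E.mulVecLin) :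
    (4 : ℤ) ∣ lorentzForm n x x := by
  obtain ⟨c, rfl⟩ := hx
  rw [← dotProduct_lorentzGram, mulVecLin_apply, dotProduct_congr, hE.congr, smul_mulVec,
    dotProduct_smul]
  obtain ⟨k, hk⟩ := even_dotProduct_mulVec hM he c
  rw [hk]
  exact ⟨k, by rw [smul_eq_mul]; ring⟩

theorem isometry_mul (hE : IsCodeEmbedding M E) {S T : Matrix (Fin (n + 1)) (Fin (n + 1)) ℤ}
    (hST : S * T = 1) (hS : Sᵀ * lorentzGram n * S = lorentzGram n) :
    IsCodeEmbedding M (S * E) where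
  congr := by
    rw [← hE.congr, transpose_mul]
    nth_rw 2 [← hS]
    simp only [Matrix.mul_assoc]
  exists_mul := by
    obtain ⟨A, hA⟩ := hE.exists_mul
    refine ⟨A * T, ?_⟩
    rw [Matrix.mul_assoc, ← Matrix.mul_assoc E, hA, Matrix.smul_mul, Matrix.one_mul,
      Matrix.mul_smul, hST]

end IsCodeEmbedding

theorem exists_isometry_of_code {D : Submodule ℤ (Fin (n + 1) → ℤ)} (hD : ∀ u, (2 : ℤ) • u ∈ D)
    {x y : Fin (n + 1) → ℤ} (hx : (4 : ℤ) ∣ lorentzForm n x x)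
    (hy : (4 : ℤ) ∣ lorentzForm n y y) (hxD : ∀ d ∈ D, Even (lorentzForm n x d))
    (hyD : ∀ d ∈ D, Even (lorentzForm n y d)) (h1x : x ∉ D ⊔ Submodule.span ℤ {1})
    (h1y : y ∉ D ⊔ Submodule.span ℤ {1}) :
    ∃ S T : Matrix (Fin (n + 1)) (Fin (n + 1)) ℤ, S * T = 1 ∧
      Sᵀ * lorentzGram n * S = lorentzGram n ∧ (∃ u, S *ᵥ x = y + (2 : ℤ) • u) ∧
      ∀ d ∈ D, ∃ u, S *ᵥ d = d + (2 : ℤ) • u := by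
  rcases Int.even_or_odd (lorentzForm n x y) with hxy | hxy
  swap
  · obtain ⟨S, hS, hSJ, hSx, hSd⟩ := exists_isometry_of_odd hx hy hxy
    exact ⟨S, S, hS, hSJ, hSx, fun d hd => hSd d (hxD d hd) (hyD d hd)⟩
  obtain ⟨z, hzx, hzy, hzD, hz⟩ : ∃ z, Odd (lorentzForm n z x) ∧ Odd (lorentzForm n z y) ∧
      (∀ d ∈ D, Even (lorentzForm n z d)) ∧ (4 : ℤ) ∣ lorentzForm n z z := by
    let W := D ⊔ Submodule.span ℤ {1} ⊔ Submodule.span ℤ {x + y}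
    have hDW : D ≤ W := le_sup_left.trans le_sup_left
    have hxW : x ∉ W := fun h => by
      obtain ⟨v, hv, w, hw, hvw⟩ := Submodule.mem_sup.1 h
      obtain ⟨b, rfl⟩ := Submodule.mem_span_singleton.1 hw
      have h2 : ∀ u, (2 : ℤ) • u ∈ D ⊔ Submodule.span ℤ {1} := fun u =>
        Submodule.mem_sup_left (hD u)
      rcases Int.even_or_odd' b with ⟨k, rfl | rfl⟩
      · refine h1x ?_
        rw [show x = v + (2 : ℤ) • k • (x + y) by rw [smul_smul, hvw]]
        exact Submodule.add_mem _ hv (h2 _)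
      · refine h1y ?_
        rw [show y = -v + (2 : ℤ) • (-k) • (x + y) + ((v + (2 * k + 1) • (x + y)) - x) by module,
          hvw, sub_self, add_zero]
        exact Submodule.add_mem _ (Submodule.neg_mem _ hv) (h2 _)
    obtain ⟨z, hzx, hzW⟩ := exists_lorentzForm_odd (fun u => hDW (hD u)) hxW
    have hzy : Odd (lorentzForm n z y) := by
      have h := hzW (x + y) (Submodule.mem_sup_right (Submodule.mem_span_singleton_self _))
      rw [map_add] at h
      exact (Int.even_add'.1 h).1 hzx
    have hz1 : Even (lorentzForm n z z) := by
      have h := hzW 1 (Submodule.mem_sup_left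
        (Submodule.mem_sup_right (Submodule.mem_span_singleton_self _)))
      have h1 := even_lorentzForm_sub_dotProduct z 1
      rw [dotProduct_one] at h1
      have := ((even_lorentzForm_self_sub_sum z).sub h1).add h
      rwa [show lorentzForm n z z - ∑ i, z i - (lorentzForm n z 1 - ∑ i, z i) + lorentzForm n z 1 =
        lorentzForm n z z by ring] at this
    have hzD : ∀ d ∈ D, Even (lorentzForm n z d) := fun d hd => hzW d (hDW hd)
    by_cases h4 : (4 : ℤ) ∣ lorentzForm n z z
    · exact ⟨z, hzx, hzy, hzD, h4⟩
    · obtain ⟨k, hk⟩ := hzx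
      obtain ⟨m, hm⟩ := hz1
      obtain ⟨a, ha⟩ := hx
      refine ⟨z + x, ?_, ?_, fun d hd => ?_, ?_⟩
      · rw [map_add, LinearMap.add_apply, hk, ha]
        exact ⟨k + 2 * a, by ring⟩
      · rw [map_add, LinearMap.add_apply]
        exact hzy.add_even hxy
      · rw [map_add, LinearMap.add_apply]
        exact (hzD d hd).add (hxD d hd)
      · simp only [map_add, LinearMap.add_apply]
        rw [lorentzForm_comm x z, hk, ha]
        omega
  obtain ⟨S₁, hS₁, hSJ₁, ⟨u₁, hu₁⟩, hSd₁⟩ :=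
    exists_isometry_of_odd hx hz (by rwa [lorentzForm_comm])
  obtain ⟨S₂, hS₂, hSJ₂, ⟨u₂, hu₂⟩, hSd₂⟩ := exists_isometry_of_odd hz hy hzy
  refine ⟨S₂ * S₁, S₁ * S₂, ?_, ?_, ⟨u₂ + S₂ *ᵥ u₁, ?_⟩, fun d hd => ?_⟩
  · rw [Matrix.mul_assoc, ← Matrix.mul_assoc S₁, hS₁, Matrix.one_mul, hS₂]
  · calc (S₂ * S₁)ᵀ * lorentzGram n * (S₂ * S₁) = S₁ᵀ * (S₂ᵀ * lorentzGram n * S₂) * S₁ := by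
          rw [transpose_mul]
          simp only [Matrix.mul_assoc]
      _ = lorentzGram n := by rw [hSJ₂, hSJ₁]
  · rw [← mulVec_mulVec, hu₁, mulVec_add, mulVec_smul, hu₂]
    module
  · obtain ⟨v₁, hv₁⟩ := hSd₁ d (hxD d hd) (hzD d hd)
    obtain ⟨v₂, hv₂⟩ := hSd₂ d (hzD d hd) (hyD d hd)
    refine ⟨v₂ + S₂ *ᵥ v₁, ?_⟩
    rw [← mulVec_mulVec, hv₁, mulVec_add, mulVec_smul, hv₂]
    module

theorem exists_isCodeEmbedding_range_le {M M' N N' E E' : Matrix (Fin (n + 1)) (Fin (n + 1)) ℤ}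
    (hM : Mᵀ = M) (he : ∀ i, Even (M i i)) (hM' : M'ᵀ = M') (he' : ∀ i, Even (M' i i))
    (hMN : M * N = (2 : ℤ) • 1) (hMN' : M' * N' = (2 : ℤ) • 1)
    (hNN' : (∀ i, Even (N i i)) ↔ ∀ i, Even (N' i i)) (hE : IsCodeEmbedding M E)
    (hE' : IsCodeEmbedding M' E') :
    ∃ F, IsCodeEmbedding M F ∧ (LinearMap.range F.mulVecLin ≤ LinearMap.range E'.mulVecLin ∨
      LinearMap.range E'.mulVecLin ≤ LinearMap.range F.mulVecLin) := by
  let 𝒟 : Set (Submodule ℤ (Fin (n + 1) → ℤ)) :=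
    {D | ∃ F, IsCodeEmbedding M F ∧
      D = LinearMap.range F.mulVecLin ⊓ LinearMap.range E'.mulVecLin}
  obtain ⟨D, ⟨F, hF, rfl⟩, hmax⟩ := set_has_maximal_iff_noetherian.2
    (inferInstance : IsNoetherian ℤ (Fin (n + 1) → ℤ)) 𝒟 ⟨_, E, hE, rfl⟩
  refine ⟨F, hF, ?_⟩
  by_contra! h
  obtain ⟨x, hx, hx'⟩ := SetLike.not_le_iff_exists.1 h.1
  obtain ⟨y, hy', hy⟩ := SetLike.not_le_iff_exists.1 h.2
  set D := LinearMap.range F.mulVecLin ⊓ LinearMap.range E'.mulVecLin with hDdef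
  have h1 : (1 : Fin (n + 1) → ℤ) ∈ LinearMap.range F.mulVecLin ↔
      (1 : Fin (n + 1) → ℤ) ∈ LinearMap.range E'.mulVecLin :=
    ((hF.exists_mulVec_eq_one_iff hMN).trans hNN').trans (hE'.exists_mulVec_eq_one_iff hMN').symm
  have hD : ∀ u, (2 : ℤ) • u ∈ D := fun u => ⟨hF.two_smul_mem u, hE'.two_smul_mem u⟩
  have key : ∀ (Λ Λ' : Submodule ℤ (Fin (n + 1) → ℤ)) (v : Fin (n + 1) → ℤ),
      (1 ∈ Λ ↔ 1 ∈ Λ') → (∀ u, (2 : ℤ) • u ∈ Λ ⊓ Λ') → v ∈ Λ → v ∉ Λ' →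
        v ∉ Λ ⊓ Λ' ⊔ Submodule.span ℤ {1} := by
    intro Λ Λ' v h1 h2 hv hv' h
    obtain ⟨d, hd, w, hw, rfl⟩ := Submodule.mem_sup.1 h
    obtain ⟨b, rfl⟩ := Submodule.mem_span_singleton.1 hw
    refine hv' (Submodule.add_mem _ hd.2 ?_)
    have hb : b • (1 : Fin (n + 1) → ℤ) ∈ Λ := by
      simpa using Submodule.sub_mem _ hv hd.1
    rcases Int.even_or_odd' b with ⟨k, rfl | rfl⟩
    · rw [mul_smul]
      exact (h2 _).2
    · have : (1 : Fin (n + 1) → ℤ) ∈ Λ := by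
        rw [show (1 : Fin (n + 1) → ℤ) = (2 * k + 1) • (1 : Fin (n + 1) → ℤ) -
          (2 : ℤ) • k • (1 : Fin (n + 1) → ℤ) by module]
        exact Submodule.sub_mem _ hb (h2 _).1
      exact Submodule.smul_mem _ _ (h1.1 this)
  obtain ⟨S, T, hST, hSJ, ⟨u, hu⟩, hSd⟩ := exists_isometry_of_code hD
    (hF.four_dvd_form_self hM he hx) (hE'.four_dvd_form_self hM' he' hy')
    (fun d hd => hF.even_form hx hd.1) (fun d hd => hE'.even_form hy' hd.2)
    (key _ _ _ h1 hD hx hx') (by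
      have := key _ _ _ h1.symm (fun u => (hD u).symm) hy' hy
      rwa [inf_comm] at this)
  have hSF := hF.isometry_mul hST hSJ
  have hmem : ∀ {v w t : Fin (n + 1) → ℤ}, v ∈ LinearMap.range F.mulVecLin →
      S *ᵥ v = w + (2 : ℤ) • t → w ∈ LinearMap.range (S * F).mulVecLin := by
    rintro _ w t ⟨c, rfl⟩ h
    rw [show w = S *ᵥ F.mulVecLin c - (2 : ℤ) • t by rw [h]; abel]
    refine Submodule.sub_mem _ ⟨c, ?_⟩ (hSF.two_smul_mem t)
    rw [mulVecLin_apply, mulVecLin_apply, mulVec_mulVec]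
  refine hmax _ ⟨S * F, hSF, rfl⟩ (lt_of_le_of_ne (fun d hd => ?_) fun heq => ?_)
  · obtain ⟨t, ht⟩ := hSd d hd
    exact ⟨hmem hd.1 ht, hd.2⟩
  · refine hy ?_
    have : y ∈ D := by
      rw [heq]
      exact ⟨hmem hx hu, hy'⟩
    exact this.1

theorem exists_congr_of_isCodeEmbedding {M M' N N' : Matrix (Fin (n + 1)) (Fin (n + 1)) ℤ}
    (hM : Mᵀ = M) (he : ∀ i, Even (M i i)) (hM' : M'ᵀ = M') (he' : ∀ i, Even (M' i i))
    (hMN : M * N = (2 : ℤ) • 1) (hMN' : M' * N' = (2 : ℤ) • 1)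
    (hNN' : (∀ i, Even (N i i)) ↔ ∀ i, Even (N' i i)) (hdet : M.det.natAbs = M'.det.natAbs)
    (hL : IsLorentzian M) (hL' : IsLorentzian M') {x x' : Fin (n + 1) → ℤ}
    (hx : ¬(4 : ℤ) ∣ x ⬝ᵥ M *ᵥ x) (hx' : ¬(4 : ℤ) ∣ x' ⬝ᵥ M' *ᵥ x') :
    ∃ P : Matrix (Fin (n + 1)) (Fin (n + 1)) ℤ, IsUnit P.det ∧ Pᵀ * M * P = M' := by
  obtain ⟨E, hE⟩ := exists_isCodeEmbedding hM he hL hMN hx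
  obtain ⟨E', hE'⟩ := exists_isCodeEmbedding hM' he' hL' hMN' hx'
  have key : ∀ {A B C D : Matrix (Fin (n + 1)) (Fin (n + 1)) ℤ}, IsCodeEmbedding A C →
      IsCodeEmbedding B D → A.det ≠ 0 → A.det.natAbs = B.det.natAbs →
      LinearMap.range C.mulVecLin ≤ LinearMap.range D.mulVecLin →
      ∃ P : Matrix (Fin (n + 1)) (Fin (n + 1)) ℤ, IsUnit P.det ∧ Pᵀ * B * P = A := by
    intro A B C D hC hD hA hAB h
    obtain ⟨P, rfl⟩ : ∃ P, D * P = C := exists_matrix_mul_eq fun j => h ⟨Pi.single j 1, by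
      rw [mulVecLin_apply, mulVec_single_one]
      rfl⟩
    have hP : Pᵀ * B * P = A := by
      refine smul_right_injective _ (two_ne_zero (α := ℤ)) ?_
      change (2 : ℤ) • (Pᵀ * B * P) = (2 : ℤ) • A
      rw [← hC.congr, ← Matrix.smul_mul, ← Matrix.mul_smul, ← hD.congr, transpose_mul]
      simp only [Matrix.mul_assoc]
    refine ⟨P, ?_, hP⟩
    have h := congrArg (fun X => X.det.natAbs) hP
    simp only [det_mul, det_transpose, Int.natAbs_mul] at h
    rw [hAB] at h
    have hB : 0 < B.det.natAbs := hAB ▸ Int.natAbs_pos.2 hA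
    rw [Int.isUnit_iff_natAbs_eq]
    refine Nat.eq_one_of_mul_eq_one_right (n := P.det.natAbs) ?_
    refine Nat.eq_of_mul_eq_mul_right hB ?_
    rw [one_mul]
    linarith
  obtain ⟨F, hF, h | h⟩ := exists_isCodeEmbedding_range_le hM he hM' he' hMN hMN' hNN' hE hE'
  · obtain ⟨P, hP, hPM⟩ := key hF hE' (det_ne_zero_of_mul_eq_two hMN) hdet h
    refine ⟨P⁻¹, isUnit_nonsing_inv_det P hP, ?_⟩
    rw [← hPM, transpose_nonsing_inv]
    simp only [Matrix.mul_assoc]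
    rw [mul_nonsing_inv _ hP, Matrix.mul_one, ← Matrix.mul_assoc,
      nonsing_inv_mul _ (by rwa [det_transpose]), Matrix.one_mul]
  · exact key hE' hF (det_ne_zero_of_mul_eq_two hMN') hdet.symm h

end CodeTransitivity

section EvenScaling

theorem even_apply_of_four_dvd {r : ℕ} {A : Matrix (Fin r) (Fin r) ℤ} (hA : Aᵀ = A)
    (h : ∀ x, (4 : ℤ) ∣ x ⬝ᵥ A *ᵥ x) (i j : Fin r) : Even (A i j) := by
  have h1 := h (Pi.single i 1)
  have h2 := h (Pi.single j 1)
  have h3 := h (Pi.single i 1 + Pi.single j 1)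
  have h4 := congrFun (congrFun hA i) j
  simp only [mulVec_add, add_dotProduct, dotProduct_add, mulVec_single_one, single_one_dotProduct,
    col_apply, transpose_apply] at h1 h2 h3 h4
  rw [even_iff_two_dvd]
  omega

variable {n : ℕ} {M N : Matrix (Fin (n + 1)) (Fin (n + 1)) ℤ}

theorem natAbs_det_and_even_of_four_dvd (hM : Mᵀ = M) (hMN : M * N = (2 : ℤ) • 1)
    (h : ∀ x, (4 : ℤ) ∣ x ⬝ᵥ M *ᵥ x) :
    M.det.natAbs = 2 ^ (n + 1) ∧ ∀ i, Even (N i i) := by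
  refine ⟨?_, fun i => ?_⟩
  · choose K hK using fun i j => even_iff_two_dvd.1 (even_apply_of_four_dvd hM h i j)
    have hMK : M = (2 : ℤ) • Matrix.of K := by
      ext i j
      rw [hK]
      rfl
    have hKN : Matrix.of K * N = 1 := by
      have : (2 : ℤ) • (Matrix.of K * N) = (2 : ℤ) • 1 := by
        rw [← Matrix.smul_mul, ← hMK, hMN]
      exact smul_right_injective _ two_ne_zero this
    rw [hMK, det_smul, Int.natAbs_mul, Int.isUnit_iff_natAbs_eq.1 (isUnit_det_of_mul_eq_one hKN)]
    simp [Int.natAbs_pow]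
  · have h1 := h (N *ᵥ Pi.single i 1)
    rw [dotProduct_congr, Matrix.mul_assoc, hMN, transpose_eq_of_mul_eq_two hMN hM,
      Matrix.mul_smul, Matrix.mul_one, smul_mulVec, dotProduct_smul] at h1
    simp only [mulVec_single_one, single_one_dotProduct, col_apply, smul_eq_mul] at h1
    rw [even_iff_two_dvd]
    omega

theorem isUnit_det_of_natAbs_det_eq (hMN : M * N = (2 : ℤ) • 1)
    (hdet : M.det.natAbs = 2 ^ (n + 1)) : IsUnit N.det := by
  have h := congrArg (fun X => X.det.natAbs) hMN
  simp only [det_mul, det_smul, det_one, Int.natAbs_mul, hdet, Int.natAbs_pow] at h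
  rw [Int.isUnit_iff_natAbs_eq]
  simpa using h

theorem inv_properties_of_isUnit_det (hM : Mᵀ = M) (hMN : M * N = (2 : ℤ) • 1) (hL : IsLorentzian M)
    (hN : IsUnit N.det) (he : ∀ i, Even (N i i)) :
    M = (2 : ℤ) • N⁻¹ ∧ N⁻¹ᵀ = N⁻¹ ∧ (∀ i, Even (N⁻¹ i i)) ∧ IsLorentzian N⁻¹ ∧
      ∃ x, ¬(4 : ℤ) ∣ x ⬝ᵥ N⁻¹ *ᵥ x := by
  have hNt := transpose_eq_of_mul_eq_two hMN hM
  have hMinv : M = (2 : ℤ) • N⁻¹ := by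
    rw [← Matrix.mul_one M, ← mul_nonsing_inv N hN, ← Matrix.mul_assoc, hMN, Matrix.smul_mul,
      Matrix.one_mul]
  have hinvt : N⁻¹ᵀ = N⁻¹ := by rw [transpose_nonsing_inv, hNt]
  refine ⟨hMinv, hinvt, fun i => ?_, ?_, ?_⟩
  · have h1 := even_dotProduct_mulVec hNt he (N⁻¹ *ᵥ Pi.single i 1)
    rw [dotProduct_congr, Matrix.mul_assoc, mul_nonsing_inv N hN, Matrix.mul_one, hinvt] at h1
    simpa only [mulVec_single_one, single_one_dotProduct, col_apply] using h1
  · refine isLorentzian_of_congr hL 1 two_pos one_pos (fun x => ⟨x, ?_⟩) (?_ : _ = (2 : ℤ) • N⁻¹)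
    · rw [one_mulVec, one_smul]
    · rw [transpose_one, Matrix.one_mul, Matrix.mul_one, hMinv]
  · by_contra! h
    choose K hK using fun i j => even_iff_two_dvd.1 (even_apply_of_four_dvd hinvt h i j)
    have hNK : N⁻¹ = (2 : ℤ) • Matrix.of K := by
      ext i j
      rw [hK]
      rfl
    have h1 := congrFun (congrFun (nonsing_inv_mul N hN) 0) 0
    rw [hNK, Matrix.smul_mul, Matrix.smul_apply, one_apply_eq, smul_eq_mul] at h1
    omega

end EvenScaling

/-- Nikulin's uniqueness theorem: two even hyperbolic 2-elementary Gram matrices with the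
same invariants `(r, a, δ)` are `ℤ`-congruent. -/
theorem stmt_9 (r a : ℕ) (M M' : Matrix (Fin r) (Fin r) ℤ)
    (hs : M.IsSymm) (hs' : M'.IsSymm)
    (he : ∀ i, Even (M i i)) (he' : ∀ i, Even (M' i i))
    (hdet : M.det ≠ 0) (hdet' : M'.det ≠ 0)
    (hh : IsHyperbolicGram M) (hh' : IsHyperbolicGram M')
    (hel : ElemOfLength 2 a M) (hel' : ElemOfLength 2 a M')
    (hδ : DeltaZero M ↔ DeltaZero M') :
    ∃ P : Matrix (Fin r) (Fin r) ℤ, IsUnit P.det ∧ Pᵀ * M * P = M' := by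
  rcases r with _ | n
  · exact ⟨1, by simp, Subsingleton.elim _ _⟩
  obtain ⟨N, hMN⟩ := hel.exists_mul_eq_two
  obtain ⟨N', hMN'⟩ := hel'.exists_mul_eq_two
  have hM : Mᵀ = M := hs
  have hM' : M'ᵀ = M' := hs'
  have hL := hh.isLorentzian
  have hL' := hh'.isLorentzian
  have hMM' : M.det.natAbs = M'.det.natAbs := by rw [hel.natAbs_det hdet, hel'.natAbs_det hdet']
  have hNN' : (∀ i, Even (N i i)) ↔ ∀ i, Even (N' i i) := by
    rw [← deltaZero_iff hMN hM, ← deltaZero_iff hMN' hM', hδ]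
  by_cases h4 : (∃ x, ¬(4 : ℤ) ∣ x ⬝ᵥ M *ᵥ x) ∧ ∃ x, ¬(4 : ℤ) ∣ x ⬝ᵥ M' *ᵥ x
  · obtain ⟨⟨x, hx⟩, x', hx'⟩ := h4
    exact exists_congr_of_isCodeEmbedding hM he hM' he' hMN hMN' hNN' hMM' hL hL' hx hx'
  obtain ⟨hd, hNe⟩ : M.det.natAbs = 2 ^ (n + 1) ∧ ∀ i, Even (N i i) := by
    rw [not_and_or] at h4
    push Not at h4
    rcases h4 with h4 | h4
    · exact natAbs_det_and_even_of_four_dvd hM hMN h4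
    · rw [hMM', hNN']
      exact natAbs_det_and_even_of_four_dvd hM' hMN' h4
  have hU := isUnit_det_of_natAbs_det_eq hMN hd
  have hU' := isUnit_det_of_natAbs_det_eq hMN' (hMM' ▸ hd)
  obtain ⟨h2, ht, hev, hLi, x, hx⟩ := inv_properties_of_isUnit_det hM hMN hL hU hNe
  obtain ⟨h2', ht', hev', hLi', x', hx'⟩ :=
    inv_properties_of_isUnit_det hM' hMN' hL' hU' (hNN'.1 hNe)
  have h2N : ∀ K : Matrix (Fin (n + 1)) (Fin (n + 1)) ℤ, ∀ i, Even (((2 : ℤ) • K) i i) :=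
    fun K i => even_two_mul (K i i)
  obtain ⟨P, hP, hPN⟩ := exists_congr_of_isCodeEmbedding ht hev ht' hev'
    (N := (2 : ℤ) • N) (N' := (2 : ℤ) • N')
    (by rw [Matrix.mul_smul, nonsing_inv_mul N hU])
    (by rw [Matrix.mul_smul, nonsing_inv_mul N' hU'])
    (iff_of_true (h2N N) (h2N N'))
    (by rw [Int.isUnit_iff_natAbs_eq.1 (isUnit_nonsing_inv_det N hU),
      Int.isUnit_iff_natAbs_eq.1 (isUnit_nonsing_inv_det N' hU')]) hLi hLi' hx hx'
  refine ⟨P, hP, ?_⟩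
  rw [h2, h2', Matrix.mul_smul, Matrix.smul_mul, hPN]
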